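/- Conservation of energy for the regularized Chern–Simons–Schrödinger equation: let β ∈ ℝ and R > 0, and let u : ℝ × ℝ² → ℂ be jointly smooth with u(t,·) Schwartz for every t (and t ↦ u(t,·) smooth into Schwartz space). Set A(t,·) := K_R ∗ |u(t,·)|² (an ℝ²-valued function) and suppose that for all (t,x): i ∂ₜ u(t,x) = −Δu(t,x) − 2iβ A(t,x)·∇u(t,x) + β² ‖A(t,x)‖² u(t,x) − β ( K_R ∗ ( 2β A(t,·)|u(t,·)|² + J[u(t,·)] ) )(x) u(t,x), where the last convolution of the vector kernel K_R with a vector field is the scalar obtained by summing the componentwise convolutions. Then the energy E(t) := ∫_{ℝ²} ‖ −i∇u(t,x) + β A(t,x) u(t,x) ‖² dx is constant in t. -/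

import Mathlib

/-!
Write `N(u)` for the right-hand side of the equation, so that `i ∂ₜu = N(u)`. By the symmetries of
`K_R`, the first variation of the energy at `u` is `2 Re ⟪N(u), ·⟫`; formally the energy is thus
constant because `Re ⟪N(u), -i N(u)⟫ = 0`.

Joint regularity is only pointwise in `x`, so this has to be justified in `L²`. On a time interval
where the `H¹` norm of `u` and the `L²` norm of `∂ₜu` are bounded, `u` is weakly differentiable as a
curve in `L²`, and a second-order Taylor inequality for the energy, with remainder
`O(‖u(t) - u(r)‖₂²)`, gives its constancy. The required local bounds come from Baire's theorem: by
Fatou, the times at which both norms are at most `n` form a closed set, and these sets cover `ℝ`.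
On an interval where some bound holds, a bound at one end passes to the other with a controlled
constant, for `H¹` by conservation of mass and energy, and for `∂ₜu` by the `L²`-stability of the
flow applied to translates in time. Hence the open set of times near which a bound holds is all of
`ℝ`.
-/

noncomputable section
open MeasureTheory ENNReal
open scoped RealInnerProductSpace

/-- The plane `ℝ²`. -/
abbrev E2 : Type := EuclideanSpace ℝ (Fin 2)

/-- The rotation by 90 degrees: `x^⊥ = (-x₂, x₁)`. -/
def perp (x : E2) : E2 := (WithLp.equiv 2 (Fin 2 → ℝ)).symm ![-(x 1), x 0]

/-- The Aharonov–Bohm kernel `K_R(x) = x^⊥ / (max R ‖x‖)²` (with `K_R 0 = 0`,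
also when `R = 0`, by the junk-value convention `(0 : ℝ)⁻¹ = 0`). -/
def K (R : ℝ) (x : E2) : E2 := ((max R ‖x‖) ^ 2)⁻¹ • perp x

/-- The standard basis of `ℝ²`. -/
def e2 (j : Fin 2) : E2 := EuclideanSpace.single j 1

/-- Componentwise convolution of the vector kernel `K_R` with a scalar density. -/
def convKs (R : ℝ) (ρ : E2 → ℝ) (x : E2) : E2 := ∫ y, ρ y • K R (x - y)

/-- Convolution of the vector kernel `K_R` with a vector field, summed over components. -/
def convKv (R : ℝ) (F : E2 → E2) (x : E2) : ℝ := ∫ y, ⟪K R (x - y), F y⟫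

/-- The current `J[u] = i(u∇ū - ū∇u) = 2 Im(ū ∇u)`, an `ℝ²`-valued function. -/
def Jf (u : E2 → ℂ) (x : E2) : E2 :=
  (WithLp.equiv 2 (Fin 2 → ℝ)).symm fun j =>
    2 * ((starRingEnd ℂ) (u x) * fderiv ℝ u x (e2 j)).im

/-- The `H¹` norm `(‖u‖₂² + ‖∇u‖₂²)^{1/2}` (extended-real valued). -/
def H1 (u : E2 → ℂ) : ℝ≥0∞ :=
  (eLpNorm u 2 volume ^ 2 + eLpNorm (fun x => fderiv ℝ u x) 2 volume ^ 2) ^ (1 / 2 : ℝ)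

/-- The `H²` norm `(‖u‖₂² + ‖∇u‖₂² + ‖∇²u‖₂²)^{1/2}` (extended-real valued). -/
def H2 (u : E2 → ℂ) : ℝ≥0∞ :=
  (eLpNorm u 2 volume ^ 2 + eLpNorm (fun x => fderiv ℝ u x) 2 volume ^ 2
    + eLpNorm (fun x => fderiv ℝ (fderiv ℝ u) x) 2 volume ^ 2) ^ (1 / 2 : ℝ)

/-- The magnetic potential `A^R[|u|²] = K_R ∗ |u|²`. -/
def Apot (R : ℝ) (u : E2 → ℂ) (x : E2) : E2 := convKs R (fun y => ‖u y‖ ^ 2) x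

/-- Laplacian of a complex function on `ℝ²`. -/
def lap (u : E2 → ℂ) (x : E2) : ℂ :=
  ∑ j : Fin 2, fderiv ℝ (fun y => fderiv ℝ u y (e2 j)) x (e2 j)

/-- Right-hand side of the regularized Chern–Simons–Schrödinger equation
`i∂ₜu = -Δu - 2iβ A·∇u + β²‖A‖²u - β(K_R ∗ (2βA|u|² + J[u]))u`,
where `A = A^R[|u|²]`. -/
def cssRHS (β R : ℝ) (u : E2 → ℂ) (x : E2) : ℂ :=
  -(lap u x) - 2 * β * Complex.I * fderiv ℝ u x (Apot R u x)
    + (↑(β ^ 2 * ‖Apot R u x‖ ^ 2) : ℂ) * u x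
    - (β : ℂ) * (↑(convKv R (fun y => (2 * β * ‖u y‖ ^ 2) • Apot R u y + Jf u y) x) : ℂ) * u x

/-- The (average-field / magnetic) energy `∫ ‖(-i∇ + β A^R[|u|²]) u‖²`. -/
def energy (β R : ℝ) (u : E2 → ℂ) : ℝ :=
  ∫ x, ∑ j : Fin 2,
    ‖-Complex.I * fderiv ℝ u x (e2 j) + (↑(β * Apot R u x j) : ℂ) * u x‖ ^ 2

section RealAnalysis

open Set Filter Topology

lemma exists_minimal_dist_mem_uIcc {F : Set ℝ} (hF : IsClosed F) {a t : ℝ} (ha : a ∈ F) :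
    ∃ e ∈ F, e ∈ uIcc a t ∧ ∀ z ∈ uIcc e t, z ≠ e → z ∉ F := by
  obtain ⟨e, ⟨heF, hea⟩, hmin⟩ := (isCompact_uIcc.inter_left hF).exists_isMinOn
    ⟨a, ha, left_mem_uIcc⟩ (continuous_id.dist (continuous_const (y := t))).continuousOn
  refine ⟨e, heF, hea, fun z hz hze hzF => hze ?_⟩
  have hle : dist e t ≤ dist z t := hmin ⟨hzF, uIcc_subset_uIcc hea right_mem_uIcc hz⟩
  simp only [Real.dist_eq] at hle
  rcases le_total e t with h | h
  · rw [uIcc_of_le h] at hz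
    rw [abs_of_nonpos (by linarith), abs_of_nonpos (by linarith [hz.2])] at hle
    linarith [hz.1]
  · rw [uIcc_of_ge h] at hz
    rw [abs_of_nonneg (by linarith), abs_of_nonneg (by linarith [hz.1])] at hle
    linarith [hz.2]

lemma exists_uIcc_subset_of_mem_nhds {B : ℕ → Set ℝ} (hmono : Monotone B) {a b : ℝ}
    (h : ∀ t ∈ uIcc a b, ∃ n, B n ∈ 𝓝 t) : ∃ n, uIcc a b ⊆ B n := by
  refine isCompact_uIcc.induction_on (p := fun s => ∃ n, s ⊆ B n) ⟨0, empty_subset _⟩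
    (fun s s' hss' ⟨n, hn⟩ => ⟨n, hss'.trans hn⟩) (fun s s' ⟨n, hn⟩ ⟨m, hm⟩ => ⟨max n m, ?_⟩)
    fun t ht => ?_
  · exact union_subset (hn.trans (hmono (le_max_left n m))) (hm.trans (hmono (le_max_right n m)))
  · obtain ⟨n, hn⟩ := h t ht
    exact ⟨B n, mem_nhdsWithin_of_mem_nhds hn, n, Subset.rfl⟩

lemma exists_uIcc_subset_of_transfer {B : ℕ → Set ℝ} (hB : ∀ n, IsClosed (B n))
    (hmono : Monotone B) (hcover : ∀ t, ∃ n, t ∈ B n)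
    (htransfer : ∀ k, ∃ K, ∀ a b, |a - b| ≤ 1 → (∃ n, uIcc a b ⊆ B n) → a ∈ B k → b ∈ B K)
    {e t : ℝ} (het : |e - t| ≤ 1) (hgood : ∀ z ∈ uIcc e t, z ≠ e → ∃ n, B n ∈ 𝓝 z) :
    ∃ n, uIcc e t ⊆ B n := by
  rcases eq_or_ne e t with rfl | hne
  · simpa using hcover e
  obtain ⟨k, hk⟩ := hcover t
  obtain ⟨K, hK⟩ := htransfer k
  refine ⟨K, ?_⟩
  have hsub : uIcc e t \ {e} ⊆ B K := fun s ⟨hs, hse⟩ => by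
    refine hK t s ?_ (exists_uIcc_subset_of_mem_nhds hmono fun z hz => hgood z ?_ ?_) hk
    · rw [abs_sub_comm e t] at het
      exact (abs_sub_right_of_mem_uIcc hs).trans het
    · exact uIcc_subset_uIcc right_mem_uIcc hs hz
    · rintro rfl
      exact hse (by
        rcases le_total z t with h | h
        · rw [uIcc_of_le h] at hs
          rw [uIcc_of_ge hs.2] at hz
          exact le_antisymm hz.1 hs.1
        · rw [uIcc_of_ge h] at hs
          rw [uIcc_of_le hs.1] at hz
          exact le_antisymm hs.2 hz.2)
  have hclosure : closure (uIcc e t \ {e}) = uIcc e t := by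
    rcases hne.lt_or_gt with h | h
    · rw [uIcc_of_le h.le, Icc_sdiff_left, closure_Ioc h.ne]
    · rw [uIcc_of_ge h.le, Icc_sdiff_right, closure_Ico h.ne]
  exact hclosure ▸ closure_minimal hsub (hB K)

theorem exists_uIcc_subset_of_iUnion_of_closed {B : ℕ → Set ℝ} (hB : ∀ n, IsClosed (B n))
    (hmono : Monotone B) (hcover : ∀ t, ∃ n, t ∈ B n)
    (htransfer : ∀ k, ∃ K, ∀ a b, |a - b| ≤ 1 → (∃ n, uIcc a b ⊆ B n) → a ∈ B k → b ∈ B K)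
    (a b : ℝ) : ∃ n, uIcc a b ⊆ B n := by
  suffices hloc : ∀ t, ∃ n, B n ∈ 𝓝 t from
    exists_uIcc_subset_of_mem_nhds hmono fun t _ => hloc t
  by_contra! hbad
  set F : Set ℝ := {t | ∀ n, B n ∉ 𝓝 t} with hFdef
  have hF : IsClosed F := by
    have : Fᶜ = ⋃ n, interior (B n) := by
      ext t; simp [hFdef, mem_interior_iff_mem_nhds]
    exact isOpen_compl_iff.1 (this ▸ isOpen_iUnion fun n => isOpen_interior)
  have : Nonempty F := nonempty_subtype.2 hbad
  have : CompleteSpace F := hF.completeSpace_coe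
  obtain ⟨k, ⟨c, hcF⟩, hc⟩ := nonempty_interior_of_iUnion_of_closed
    (f := fun n => ((↑) : F → ℝ) ⁻¹' B n) (fun n => (hB n).preimage continuous_subtype_val)
    (eq_univ_of_forall fun t => mem_iUnion.2 (hcover t))
  obtain ⟨ε, hε, hball⟩ := Metric.mem_nhds_iff.1 (mem_interior_iff_mem_nhds.1 hc)
  obtain ⟨K, hK⟩ := htransfer k
  have hδ : 0 < min ε 1 := lt_min hε one_pos
  refine hcF K (mem_of_superset (Metric.ball_mem_nhds c hδ) fun t ht => ?_)
  have htc : |t - c| < min ε 1 := by simpa [Real.dist_eq] using ht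
  obtain ⟨e, heF, hec, hgood⟩ := exists_minimal_dist_mem_uIcc hF hcF (t := t)
  have hek : e ∈ B k := hball (a := ⟨e, heF⟩) <| by
    have : |e - c| ≤ |t - c| := abs_sub_left_of_mem_uIcc hec
    simpa [Subtype.dist_eq, Real.dist_eq] using this.trans_lt (htc.trans_le (min_le_left ε 1))
  have het : |e - t| ≤ 1 := by
    rw [abs_sub_comm]
    exact (abs_sub_right_of_mem_uIcc hec).trans (htc.le.trans (min_le_right ε 1))
  refine hK e t het (exists_uIcc_subset_of_transfer hB hmono hcover htransfer het ?_) hek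
  simpa [hFdef] using hgood

lemma le_of_eventually_sub_le_right {f : ℝ → ℝ} {a b : ℝ} (hab : a ≤ b)
    (hf : ContinuousOn f (Icc a b))
    (h : ∀ r ∈ Ico a b, ∀ ε > 0, ∀ᶠ z in 𝓝[>] r, f r - ε * (z - r) ≤ f z) : f a ≤ f b := by
  have hneg := image_le_of_liminf_slope_right_le_deriv_boundary (f := fun r => -f r)
    (B := fun _ => -f a) (B' := 0) hf.neg le_rfl continuousOn_const
    (fun x _ => hasDerivWithinAt_const _ _ _) (fun r hr ε hε => ?_) (right_mem_Icc.2 hab)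
  · simpa using hneg
  · refine Eventually.frequently ?_
    filter_upwards [h r hr (ε / 2) (half_pos hε), self_mem_nhdsWithin] with z hz hrz
    have hrz : 0 < z - r := sub_pos.2 hrz
    rw [slope_def_field, div_lt_iff₀ hrz]
    rw [Pi.zero_apply] at hε
    nlinarith

theorem eq_of_eventually_sub_le {f : ℝ → ℝ} {a b : ℝ} (hf : ContinuousOn f (uIcc a b))
    (h : ∀ r ∈ uIcc a b, ∀ ε > 0, ∀ᶠ z in 𝓝[uIcc a b] r, f r - ε * |z - r| ≤ f z) :
    f a = f b := by
  wlog hab : a ≤ b generalizing a b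
  · exact (this (uIcc_comm a b ▸ hf) (uIcc_comm a b ▸ h) (le_of_not_ge hab)).symm
  rw [uIcc_of_le hab] at hf h
  refine le_antisymm (le_of_eventually_sub_le_right hab hf fun r hr ε hε => ?_) ?_
  · have := (h r (Ico_subset_Icc_self hr) ε hε).filter_mono
      (nhdsWithin_le_iff.2 (Icc_mem_nhdsGT_of_mem hr))
    filter_upwards [this, self_mem_nhdsWithin] with z hz hrz
    rwa [abs_of_pos (sub_pos.2 hrz)] at hz
  · have hmaps : MapsTo (fun r : ℝ => -r) (Icc (-b) (-a)) (Icc a b) := fun r hr =>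
      ⟨by linarith [hr.2], by linarith [hr.1]⟩
    have := le_of_eventually_sub_le_right (f := fun r => f (-r)) (neg_le_neg hab)
      (hf.comp continuous_neg.continuousOn hmaps) fun r hr ε hε => ?_
    · simpa using this
    have htend : Tendsto (fun z : ℝ => -z) (𝓝[>] r) (𝓝[Icc a b] (-r)) :=
      tendsto_nhdsWithin_of_tendsto_nhds_of_eventually_within _
        (continuous_neg.continuousAt.mono_left nhdsWithin_le_nhds)
        (by filter_upwards [Icc_mem_nhdsGT_of_mem hr] with z hz using hmaps hz)
    filter_upwards [htend.eventually (h (-r) (hmaps (Ico_subset_Icc_self hr)) ε hε),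
      self_mem_nhdsWithin] with z hz hrz
    have : -z - -r = -(z - r) := by ring
    rwa [this, abs_neg, abs_of_pos (sub_pos.2 hrz)] at hz

lemma sqrt_le_exp_mul_of_hasDerivWithinAt_of_pos {f g : ℝ → ℝ} {C ρ a b : ℝ} (hC : 0 ≤ C)
    (hρ : 0 ≤ ρ) (hab : a ≤ b) (hf : ∀ t, 0 < f t)
    (hfg : ∀ t ∈ Icc a b, HasDerivWithinAt f (2 * g t) (Icc a b) t)
    (hg : ∀ t ∈ Icc a b, g t ≤ C * f t + ρ * √(f t)) :
    √(f b) ≤ Real.exp (C * (b - a)) * (√(f a) + ρ * (b - a)) := by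
  set G : ℝ → ℝ := fun t => Real.exp (-(C * (t - a))) * √(f t) - ρ * (t - a) with hGdef
  have hG : ∀ t ∈ Icc a b, HasDerivWithinAt G
      (Real.exp (-(C * (t - a))) * (g t / √(f t) - C * √(f t)) - ρ) (Icc a b) t := by
    intro t ht
    have hsqrt : HasDerivWithinAt (fun t => √(f t)) (g t / √(f t)) (Icc a b) t := by
      convert (hfg t ht).sqrt (hf t).ne' using 1
      rw [mul_div_mul_left _ _ two_ne_zero]
    have hlin : ∀ c : ℝ, HasDerivWithinAt (fun t => c * (t - a)) c (Icc a b) t := fun c => by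
      simpa using ((hasDerivWithinAt_id t _).sub_const a).const_mul c
    exact (((hlin C).fun_neg.exp.mul hsqrt).sub (hlin ρ)).congr_deriv (by ring)
  have hG' : ∀ t ∈ Icc a b, Real.exp (-(C * (t - a))) * (g t / √(f t) - C * √(f t)) - ρ ≤ 0 := by
    intro t ht
    have hquot : g t / √(f t) - C * √(f t) ≤ ρ := by
      rw [sub_le_iff_le_add, div_le_iff₀ (Real.sqrt_pos.2 (hf t))]
      nlinarith [hg t ht, Real.mul_self_sqrt (hf t).le]
    have hexp : Real.exp (-(C * (t - a))) ≤ 1 :=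
      Real.exp_le_one_iff.2 (neg_nonpos.2 (mul_nonneg hC (sub_nonneg.2 ht.1)))
    nlinarith [mul_le_mul_of_nonneg_left hquot (Real.exp_pos (-(C * (t - a)))).le,
      mul_le_mul_of_nonneg_right hexp hρ]
  have hGab : G b ≤ G a := antitoneOn_of_hasDerivWithinAt_nonpos (convex_Icc a b)
    (fun t ht => (hG t ht).continuousWithinAt)
    (fun t ht => (hG t (interior_subset ht)).mono interior_subset)
    (fun t ht => hG' t (interior_subset ht)) (left_mem_Icc.2 hab) (right_mem_Icc.2 hab) hab
  simp only [hGdef, sub_self, mul_zero, Real.exp_zero, sub_zero, Real.exp_neg] at hGab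
  rw [← inv_mul_le_iff₀ (Real.exp_pos _)]
  linarith

theorem sqrt_le_exp_mul_of_hasDerivWithinAt {f g : ℝ → ℝ} {C ρ a b : ℝ} (hC : 0 ≤ C)
    (hρ : 0 ≤ ρ) (hab : a ≤ b) (hf : ∀ t, 0 ≤ f t)
    (hfg : ∀ t ∈ Icc a b, HasDerivWithinAt f (2 * g t) (Icc a b) t)
    (hg : ∀ t ∈ Icc a b, g t ≤ C * f t + ρ * √(f t)) :
    √(f b) ≤ Real.exp (C * (b - a)) * (√(f a) + ρ * (b - a)) := by
  have hreg : ∀ ε > 0, √(f b + ε) ≤ Real.exp (C * (b - a)) * (√(f a + ε) + ρ * (b - a)) := by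
    intro ε hε
    refine sqrt_le_exp_mul_of_hasDerivWithinAt_of_pos hC hρ hab
      (fun t => add_pos_of_nonneg_of_pos (hf t) hε) (fun t ht => (hfg t ht).add_const ε)
      fun t ht => (hg t ht).trans ?_
    gcongr <;> linarith
  have hcont : ∀ x, Tendsto (fun ε => √(x + ε)) (𝓝[>] 0) (𝓝 √x) := fun x =>
    Continuous.tendsto' (by fun_prop) 0 _ (by simp) |>.mono_left nhdsWithin_le_nhds
  exact le_of_tendsto_of_tendsto (hcont _) (((hcont _).add_const _).const_mul _)
    (eventually_nhdsWithin_of_forall hreg)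

end RealAnalysis

/-- The curve `w` in a Hilbert space has the weak derivative `w'` along `s`: every scalar function
`t ↦ ⟪φ, w t⟫` is differentiable within `s`, with derivative `⟪φ, w' t⟫`. -/
def HasWeakDerivOn {H : Type*} [NormedAddCommGroup H] [InnerProductSpace ℝ H] (w w' : ℝ → H)
    (s : Set ℝ) : Prop :=
  ∀ t ∈ s, ∀ φ : H, HasDerivWithinAt (fun r => ⟪φ, w r⟫) ⟪φ, w' t⟫ s t

namespace HasWeakDerivOn

open Set Filter Topology

variable {H : Type*} [NormedAddCommGroup H] [InnerProductSpace ℝ H]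
  {w w' v v' : ℝ → H} {s : Set ℝ} {D : Set H} {M C a b t : ℝ}

lemma norm_sub_le_of_dense (hD : Dense D)
    (h : ∀ t ∈ s, ∀ φ ∈ D, HasDerivWithinAt (fun r => ⟪φ, w r⟫) ⟪φ, w' t⟫ s t)
    (hs : Convex ℝ s) (hM : ∀ t ∈ s, ‖w' t‖ ≤ M) {r : ℝ} (hr : r ∈ s) (ht : t ∈ s) :
    ‖w t - w r‖ ≤ M * |t - r| := by
  have hdense : ∀ φ : H, ‖⟪φ, w t - w r⟫‖ ≤ ‖φ‖ * M * |t - r| := by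
    refine fun φ => hD.induction (P := fun φ => ‖⟪φ, w t - w r⟫‖ ≤ ‖φ‖ * M * |t - r|)
      (fun φ hφ => ?_) (isClosed_le (by fun_prop) (by fun_prop)) φ
    rw [inner_sub_right]
    exact hs.norm_image_sub_le_of_norm_hasDerivWithin_le (fun z hz => h z hz φ hφ)
      (fun z hz => (norm_inner_le_norm _ _).trans (by gcongr; exact hM z hz)) hr ht
  have hself := hdense (w t - w r)
  rw [real_inner_self_eq_norm_sq, norm_pow, norm_norm, sq, mul_assoc] at hself
  rcases (norm_nonneg (w t - w r)).eq_or_lt with h0 | hpos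
  · rw [← h0]
    exact mul_nonneg ((norm_nonneg _).trans (hM t ht)) (abs_nonneg _)
  · exact le_of_mul_le_mul_left hself hpos

lemma of_dense (hD : Dense D)
    (h : ∀ t ∈ s, ∀ φ ∈ D, HasDerivWithinAt (fun r => ⟪φ, w r⟫) ⟪φ, w' t⟫ s t)
    (hs : Convex ℝ s) (hM : ∀ t ∈ s, ‖w' t‖ ≤ M) : HasWeakDerivOn w w' s := by
  intro t ht φ
  have hM0 : 0 ≤ M := (norm_nonneg _).trans (hM t ht)
  rw [hasDerivWithinAt_iff_isLittleO, Asymptotics.isLittleO_iff]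
  intro ε hε
  obtain ⟨ψ, hψD, hψ⟩ := hD.exists_dist_lt φ (ε := ε / (4 * (M + 1))) (by positivity)
  have hψ' := (hasDerivWithinAt_iff_isLittleO.1 (h t ht ψ hψD)).def (half_pos hε)
  filter_upwards [hψ', self_mem_nhdsWithin] with z hz hzs
  have hrem : ‖w z - w t - (z - t) • w' t‖ ≤ 2 * M * |z - t| := by
    refine (norm_sub_le _ _).trans ?_
    rw [norm_smul, Real.norm_eq_abs]
    nlinarith [norm_sub_le_of_dense hD h hs hM ht hzs, hM t ht, abs_nonneg (z - t)]
  have hsplit : ⟪φ, w z⟫ - ⟪φ, w t⟫ - (z - t) • ⟪φ, w' t⟫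
      = (⟪ψ, w z⟫ - ⟪ψ, w t⟫ - (z - t) • ⟪ψ, w' t⟫)
        + ⟪φ - ψ, w z - w t - (z - t) • w' t⟫ := by
    simp only [inner_sub_left, inner_sub_right, inner_smul_right, smul_eq_mul]
    ring
  calc ‖⟪φ, w z⟫ - ⟪φ, w t⟫ - (z - t) • ⟪φ, w' t⟫‖
      ≤ ε / 2 * |z - t| + ε / (4 * (M + 1)) * (2 * M * |z - t|) := by
        rw [hsplit]
        refine (norm_add_le _ _).trans (add_le_add hz ((norm_inner_le_norm _ _).trans ?_))
        rw [dist_eq_norm] at hψ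
        gcongr
    _ ≤ ε / 2 * |z - t| + ε / 2 * |z - t| := by
        refine add_le_add_right ?_ _
        rw [div_mul_eq_mul_div, div_le_iff₀ (by positivity)]
        nlinarith [mul_nonneg hε.le (abs_nonneg (z - t))]
    _ = ε * ‖z - t‖ := by rw [Real.norm_eq_abs]; ring

lemma norm_sub_le (h : HasWeakDerivOn w w' s) (hs : Convex ℝ s) (hM : ∀ t ∈ s, ‖w' t‖ ≤ M)
    {r : ℝ} (hr : r ∈ s) (ht : t ∈ s) : ‖w t - w r‖ ≤ M * |t - r| :=
  norm_sub_le_of_dense dense_univ (fun z hz φ _ => h z hz φ) hs hM hr ht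

lemma mono (h : HasWeakDerivOn w w' s) {s' : Set ℝ} (hs' : s' ⊆ s) : HasWeakDerivOn w w' s' :=
  fun t ht φ => (h t (hs' ht) φ).mono hs'

lemma sub (h : HasWeakDerivOn w w' s) (h' : HasWeakDerivOn v v' s) :
    HasWeakDerivOn (fun t => w t - v t) (fun t => w' t - v' t) s := fun t ht φ => by
  simpa only [inner_sub_right] using (h t ht φ).fun_sub (h' t ht φ)

lemma const (c : H) (s : Set ℝ) : HasWeakDerivOn (fun _ => c) (fun _ => 0) s := fun t _ φ => by
  simpa using hasDerivWithinAt_const t s ⟪φ, c⟫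

lemma comp_add_const (h : HasWeakDerivOn w w' s) (y : ℝ) :
    HasWeakDerivOn (fun t => w (t + y)) (fun t => w' (t + y)) ((· + y) ⁻¹' s) := fun t ht φ => by
  have := (h (t + y) ht φ).scomp t ((hasDerivWithinAt_id t _).add_const y)
    (mapsTo_preimage (· + y) s)
  simpa [Function.comp_def] using this

lemma comp_neg (h : HasWeakDerivOn w w' s) :
    HasWeakDerivOn (fun t => w (-t)) (fun t => -w' (-t)) (Neg.neg ⁻¹' s) := fun t ht φ => by
  have := (h (-t) ht φ).scomp t (hasDerivWithinAt_neg t _) (mapsTo_preimage Neg.neg s)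
  simpa [Function.comp_def] using this

lemma norm_sq (h : HasWeakDerivOn w w' s) (hs : Convex ℝ s) (hM : ∀ t ∈ s, ‖w' t‖ ≤ M)
    (ht : t ∈ s) : HasDerivWithinAt (fun r => ‖w r‖ ^ 2) (2 * ⟪w t, w' t⟫) s t := by
  have hquad : HasDerivWithinAt (fun r => ‖w r - w t‖ ^ 2) 0 s t := by
    have hO : (fun r => ‖w r - w t‖ ^ 2) =O[𝓝[s] t] fun r => ‖r - t‖ ^ 2 := by
      refine (Asymptotics.IsBigO.of_bound M ?_).pow 2
      filter_upwards [self_mem_nhdsWithin] with r hr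
      simpa using h.norm_sub_le hs hM ht hr
    simpa using (hO.hasFDerivWithinAt ht one_lt_two).hasDerivWithinAt
  have hexpand : (fun r => ‖w r‖ ^ 2)
      = fun r => 2 * ⟪w t, w r⟫ - ‖w t‖ ^ 2 + ‖w r - w t‖ ^ 2 := by
    ext r
    rw [norm_sub_sq_real, real_inner_comm]
    ring
  rw [hexpand]
  simpa using (((h t ht (w t)).const_mul 2).sub_const (‖w t‖ ^ 2)).fun_add hquad

lemma norm_eq_of_inner_eq_zero (h : HasWeakDerivOn w w' s) (hs : Convex ℝ s)
    (hM : ∀ t ∈ s, ‖w' t‖ ≤ M) (h0 : ∀ t ∈ s, ⟪w t, w' t⟫ = 0) (ha : a ∈ s) (hb : b ∈ s) :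
    ‖w a‖ = ‖w b‖ := by
  have hconst := hs.norm_image_sub_le_of_norm_hasDerivWithin_le (C := 0)
    (fun t ht => h.norm_sq hs hM ht) (fun t ht => by simp [h0 t ht]) ha hb
  rw [zero_mul, norm_le_zero_iff, sub_eq_zero] at hconst
  exact ((sq_eq_sq₀ (norm_nonneg _) (norm_nonneg _)).1 hconst).symm

lemma norm_le_exp_mul (h : HasWeakDerivOn w w' (Icc a b)) (hab : a ≤ b)
    (hM : ∀ t ∈ Icc a b, ‖w' t‖ ≤ M) (hC : 0 ≤ C) {ρ : ℝ} (hρ : 0 ≤ ρ)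
    (hgrowth : ∀ t ∈ Icc a b, ⟪w t, w' t⟫ ≤ C * ‖w t‖ ^ 2 + ρ * ‖w t‖) :
    ‖w b‖ ≤ Real.exp (C * (b - a)) * (‖w a‖ + ρ * (b - a)) := by
  have := sqrt_le_exp_mul_of_hasDerivWithinAt (f := fun t => ‖w t‖ ^ 2) hC hρ hab
    (fun t => sq_nonneg _) (fun t ht => h.norm_sq (convex_Icc a b) hM ht)
    (fun t ht => by simpa only [Real.sqrt_sq (norm_nonneg _)] using hgrowth t ht)
  simpa only [Real.sqrt_sq (norm_nonneg _)] using this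

lemma norm_deriv_le_of_forall_norm_sub_le (h : HasWeakDerivOn w w' (Icc a b)) (hab : a < b)
    {L : ℝ} (hL : ∀ t ∈ Ico a b, ‖w b - w t‖ ≤ L * (b - t)) : ‖w' b‖ ≤ L := by
  have hb : b ∈ Icc a b := right_mem_Icc.2 hab.le
  have htend := (hasDerivWithinAt_iff_tendsto_slope.1 (h b hb (w' b))).norm
  rw [Icc_sdiff_right] at htend
  have : (𝓝[Ico a b] b).NeBot :=
    mem_closure_iff_nhdsWithin_neBot.1 (by rwa [closure_Ico hab.ne])
  have hle : ‖⟪w' b, w' b⟫‖ ≤ ‖w' b‖ * L := by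
    refine le_of_tendsto htend ?_
    filter_upwards [self_mem_nhdsWithin] with t ht
    have htb : 0 < b - t := sub_pos.2 ht.2
    rw [slope_comm, slope_def_field, ← inner_sub_right, norm_div, Real.norm_of_nonneg htb.le,
      div_le_iff₀ htb, mul_assoc]
    exact (norm_inner_le_norm _ _).trans (by gcongr; exact hL t ht)
  rw [real_inner_self_eq_norm_sq, norm_pow, norm_norm, sq] at hle
  rcases (norm_nonneg (w' b)).eq_or_lt with h0 | hpos
  · rw [← h0]
    exact nonneg_of_mul_nonneg_left ((norm_nonneg _).trans (hL a ⟨le_rfl, hab⟩)) (sub_pos.2 hab)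
  · exact le_of_mul_le_mul_left hle hpos

lemma norm_add_sub_le (h : HasWeakDerivOn w w' (Icc a b)) (hM : ∀ t ∈ Icc a b, ‖w' t‖ ≤ M)
    (hC : 0 ≤ C)
    (hstab : ∀ r ∈ Icc a b, ∀ t ∈ Icc a b,
      ⟪w r - w t, w' r - w' t⟫ ≤ C * ‖w r - w t‖ ^ 2) {y : ℝ} (hy : 0 ≤ y) (hab : a + y ≤ b) :
    ‖w (a + y) - w a‖ ≤ Real.exp (C * y) * (‖w' a‖ * y) := by
  have haI : a ∈ Icc a b := left_mem_Icc.2 (by linarith)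
  have hsub : Icc a (a + y) ⊆ Icc a b := Icc_subset_Icc_right hab
  have hgrow := ((h.mono hsub).sub (const (w a) _)).norm_le_exp_mul (M := M) (C := C)
    (ρ := ‖w' a‖) (by linarith) (fun r hr => by simpa using hM r (hsub hr)) hC (norm_nonneg _)
    fun r hr => ?_
  · simpa using hgrow
  have hsplit : ⟪w r - w a, w' r - 0⟫
      = ⟪w r - w a, w' r - w' a⟫ + ⟪w r - w a, w' a⟫ := by
    rw [← inner_add_right, sub_add_cancel, sub_zero]
  rw [hsplit, mul_comm ‖w' a‖]
  exact add_le_add (hstab r (hsub hr) a haI) (real_inner_le_norm _ _)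

lemma norm_translate_sub_le (h : HasWeakDerivOn w w' (Icc a b))
    (hM : ∀ t ∈ Icc a b, ‖w' t‖ ≤ M) (hC : 0 ≤ C)
    (hstab : ∀ r ∈ Icc a b, ∀ t ∈ Icc a b,
      ⟪w r - w t, w' r - w' t⟫ ≤ C * ‖w r - w t‖ ^ 2) {y : ℝ} (hy : 0 ≤ y) (hat : a ≤ t)
    (htb : t + y ≤ b) :
    ‖w (t + y) - w t‖ ≤ Real.exp (C * (t - a)) * ‖w (a + y) - w a‖ := by
  have hsub : Icc a t ⊆ Icc a b := Icc_subset_Icc_right (by linarith)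
  have hsub' : Icc a t ⊆ (· + y) ⁻¹' Icc a b := fun r hr =>
    ⟨by linarith [hr.1], by linarith [hr.2]⟩
  simpa using (((h.comp_add_const y).mono hsub').sub (h.mono hsub)).norm_le_exp_mul
    (M := M + M) (C := C) (ρ := 0) hat
    (fun r hr => norm_sub_le_of_le (hM _ (hsub' hr)) (hM r (hsub hr))) hC le_rfl
    fun r hr => by simpa using hstab (r + y) (hsub' hr) r (hsub hr)

/-- Compare the solution with its translates in time: `‖w (t + y) - w t‖` grows at most
exponentially in `t`, and dividing by `y → 0` gives the bound for the derivative. -/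
lemma norm_deriv_right_le (h : HasWeakDerivOn w w' (Icc a b)) (hab : a ≤ b)
    (hM : ∀ t ∈ Icc a b, ‖w' t‖ ≤ M) (hC : 0 ≤ C)
    (hstab : ∀ r ∈ Icc a b, ∀ t ∈ Icc a b,
      ⟪w r - w t, w' r - w' t⟫ ≤ C * ‖w r - w t‖ ^ 2) :
    ‖w' b‖ ≤ Real.exp (C * (b - a)) * ‖w' a‖ := by
  rcases hab.eq_or_lt with rfl | hab
  · simp
  refine norm_deriv_le_of_forall_norm_sub_le h hab fun t ht => ?_
  obtain ⟨y, rfl⟩ : ∃ y, b = t + y := ⟨b - t, by ring⟩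
  have hy : 0 ≤ y := by linarith [ht.2]
  calc ‖w (t + y) - w t‖ ≤ Real.exp (C * (t - a)) * ‖w (a + y) - w a‖ :=
        h.norm_translate_sub_le hM hC hstab hy ht.1 le_rfl
    _ ≤ Real.exp (C * (t - a)) * (Real.exp (C * y) * (‖w' a‖ * y)) := by
        gcongr
        exact h.norm_add_sub_le hM hC hstab hy (by linarith [ht.1])
    _ = Real.exp (C * (t + y - a)) * ‖w' a‖ * (t + y - t) := by
        rw [← mul_assoc, ← Real.exp_add]
        ring_nf

theorem norm_deriv_le_exp_mul (h : HasWeakDerivOn w w' (uIcc a b))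
    (hM : ∀ t ∈ uIcc a b, ‖w' t‖ ≤ M) (hC : 0 ≤ C)
    (hstab : ∀ r ∈ uIcc a b, ∀ t ∈ uIcc a b,
      |⟪w r - w t, w' r - w' t⟫| ≤ C * ‖w r - w t‖ ^ 2) :
    ‖w' b‖ ≤ Real.exp (C * |b - a|) * ‖w' a‖ := by
  rcases le_total a b with hab | hab
  · rw [uIcc_of_le hab] at h hM hstab
    rw [abs_of_nonneg (sub_nonneg.2 hab)]
    exact h.norm_deriv_right_le hab hM hC fun r hr t ht => (le_abs_self _).trans (hstab r hr t ht)
  · rw [uIcc_of_ge hab] at h hM hstab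
    have hneg : Neg.neg ⁻¹' Icc b a = Icc (-a) (-b) := by simp
    have hmem : ∀ t ∈ Icc (-a) (-b), -t ∈ Icc b a := fun t ht => by rwa [← hneg] at ht
    have := (hneg ▸ h.comp_neg).norm_deriv_right_le (M := M) (C := C) (neg_le_neg hab)
      (fun t ht => by simpa using hM (-t) (hmem t ht)) hC fun r hr t ht => ?_
    · rw [← neg_sub', inner_neg_right]
      exact (neg_le_abs _).trans (hstab (-r) (hmem r hr) (-t) (hmem t ht))
    · rw [abs_of_nonpos (sub_nonpos.2 hab), neg_sub]
      simpa [neg_add_eq_sub] using this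

lemma continuousOn (h : HasWeakDerivOn w w' s) (hs : Convex ℝ s) (hM : ∀ t ∈ s, ‖w' t‖ ≤ M) :
    ContinuousOn w s := fun t ht => by
  rw [ContinuousWithinAt, tendsto_iff_norm_sub_tendsto_zero]
  refine squeeze_zero' (Eventually.of_forall fun _ => norm_nonneg _)
    (g := fun r => M * |r - t|) ?_ ?_
  · filter_upwards [self_mem_nhdsWithin] with r hr using h.norm_sub_le hs hM ht hr
  · exact (Continuous.tendsto' (by fun_prop) t 0 (by simp)).mono_left nhdsWithin_le_nhds

/-- Only one-sided Taylor bounds for `e` are assumed; exchanging the two points supplies the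
other side. -/
theorem eq_of_taylor_le {e : ℝ → ℝ} {n : ℝ → H} {N : ℝ} (h : HasWeakDerivOn w w' (uIcc a b))
    (hM : ∀ t ∈ uIcc a b, ‖w' t‖ ≤ M) (hN : ∀ t ∈ uIcc a b, ‖n t‖ ≤ N)
    (horth : ∀ t ∈ uIcc a b, ⟪n t, w' t⟫ = 0)
    (htaylor : ∀ r ∈ uIcc a b, ∀ t ∈ uIcc a b,
      e r + 2 * ⟪n r, w t - w r⟫ - C * ‖w t - w r‖ ^ 2 ≤ e t) : e a = e b := by
  have hs : Convex ℝ (uIcc a b) := convex_uIcc a b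
  have hw := h.continuousOn hs hM
  refine eq_of_eventually_sub_le (fun r hr => ?_) fun r hr ε hε => ?_
  · rw [ContinuousWithinAt, tendsto_iff_norm_sub_tendsto_zero]
    have hmajor : Tendsto (fun t => 2 * (N * ‖w t - w r‖) + C * ‖w t - w r‖ ^ 2)
        (𝓝[uIcc a b] r) (𝓝 0) := by
      have := tendsto_iff_norm_sub_tendsto_zero.1 (hw r hr)
      simpa using ((this.const_mul N).const_mul 2).add ((this.pow 2).const_mul C)
    refine squeeze_zero' (Eventually.of_forall fun _ => norm_nonneg _) ?_ hmajor
    filter_upwards [self_mem_nhdsWithin] with t ht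
    have hbound : ∀ z ∈ uIcc a b, |⟪n z, w t - w r⟫| ≤ N * ‖w t - w r‖ := fun z hz =>
      (abs_real_inner_le_norm _ _).trans (by gcongr; exact hN z hz)
    have hback := htaylor t ht r hr
    rw [← neg_sub (w t), inner_neg_right, norm_neg] at hback
    rw [Real.norm_eq_abs, abs_le]
    constructor <;> linarith [htaylor r hr t ht, hback, (abs_le.1 (hbound r hr)).1,
      (abs_le.1 (hbound t ht)).2]
  · have hlittle : HasDerivWithinAt
        (fun t => 2 * ⟪n r, w t - w r⟫ - C * ‖w t - w r‖ ^ 2) 0 (uIcc a b) r := by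
      have hsub := h.sub (const (w r) _)
      have hM' : ∀ t ∈ uIcc a b, ‖w' t - 0‖ ≤ M := by simpa using hM
      simpa [horth r hr] using
        ((hsub r hr (n r)).const_mul 2).fun_sub ((hsub.norm_sq hs hM' hr).const_mul C)
    filter_upwards [(hasDerivWithinAt_iff_isLittleO.1 hlittle).def hε, self_mem_nhdsWithin]
      with t ht hmem
    simp only [sub_self, inner_zero_right, norm_zero, mul_zero, smul_zero, sub_zero,
      Real.norm_eq_abs, ne_eq, OfNat.ofNat_ne_zero, not_false_eq_true, zero_pow] at ht
    linarith [(abs_le.1 ht).1, htaylor r hr t hmem]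

end HasWeakDerivOn

/-- The real `L²` pairing of two functions; for complex-valued functions this is
`Re ∫ f̄ g`. It has the junk value `0` where `⟪f, g⟫` is not integrable. -/
def l2Inner {α F : Type*} [MeasureSpace α] [NormedAddCommGroup F] [InnerProductSpace ℝ F]
    (f g : α → F) : ℝ := ∫ x, ⟪f x, g x⟫

local notation "⟪" f "," g "⟫₂" => l2Inner f g
local notation "‖" f "‖₂" => lpNorm f 2 volume

section SquareIntegrable

variable {α F : Type*} [MeasureSpace α] [NormedAddCommGroup F] {f g h : α → F}

lemma norm_toLp_eq_lpNorm (hf : MemLp f 2) : ‖hf.toLp f‖ = ‖f‖₂ := by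
  rw [Lp.norm_toLp, toReal_eLpNorm hf.1]

lemma abs_lpNorm_sub_lpNorm_le (hf : MemLp f 2) (hg : MemLp g 2) :
    |‖f‖₂ - ‖g‖₂| ≤ ‖f - g‖₂ := by
  rw [← norm_toLp_eq_lpNorm hf, ← norm_toLp_eq_lpNorm hg, ← norm_toLp_eq_lpNorm (hf.sub hg),
    MemLp.toLp_sub]
  exact abs_norm_sub_norm_le _ _

variable {G : Type*} [NormedAddCommGroup G] {k : α → G}

lemma lpNorm_le_mul_lpNorm (hk : MemLp k 2) {c : ℝ} (hc : 0 ≤ c) (h : ∀ x, ‖f x‖ ≤ c * ‖k x‖) :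
    ‖f‖₂ ≤ c * ‖k‖₂ := by
  have := lpNorm_mono_real (hk.norm.const_mul c) h
  rwa [show (fun x => c * ‖k x‖) = c • fun x => ‖k x‖ from rfl, lpNorm_const_smul,
    lpNorm_norm hk.1, coe_nnnorm, Real.norm_of_nonneg hc] at this

lemma integrable_norm_mul_norm (hf : MemLp f 2) (hk : MemLp k 2) :
    Integrable fun x => ‖f x‖ * ‖k x‖ :=
  MemLp.integrable_mul (p := 2) (q := 2) hf.norm hk.norm

variable [InnerProductSpace ℝ F]

lemma l2Inner_eq_inner_toLp (hf : MemLp f 2) (hg : MemLp g 2) :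
    ⟪f, g⟫₂ = ⟪hf.toLp f, hg.toLp g⟫ := by
  rw [L2.inner_def]
  refine integral_congr_ae ?_
  filter_upwards [hf.coeFn_toLp, hg.coeFn_toLp] with x hfx hgx
  rw [hfx, hgx]

lemma integrable_inner_of_memLp_two (hf : MemLp f 2) (hg : MemLp g 2) :
    Integrable fun x => ⟪f x, g x⟫ := by
  refine (L2.integrable_inner (𝕜 := ℝ) (hf.toLp f) (hg.toLp g)).congr ?_
  filter_upwards [hf.coeFn_toLp, hg.coeFn_toLp] with x hfx hgx
  rw [hfx, hgx]

lemma l2Inner_comm (f g : α → F) : ⟪f, g⟫₂ = ⟪g, f⟫₂ := by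
  simp only [l2Inner, real_inner_comm]

lemma l2Inner_self (hf : MemLp f 2) : ⟪f, f⟫₂ = ‖f‖₂ ^ 2 := by
  rw [l2Inner_eq_inner_toLp hf hf, real_inner_self_eq_norm_sq, norm_toLp_eq_lpNorm]

lemma lpNorm_two_sq (hf : MemLp f 2) : ‖f‖₂ ^ 2 = ∫ x, ‖f x‖ ^ 2 := by
  simp only [← l2Inner_self hf, l2Inner, real_inner_self_eq_norm_sq]

lemma l2Inner_add_right (hf : MemLp f 2) (hg : MemLp g 2) (hh : MemLp h 2) :
    ⟪f, g + h⟫₂ = ⟪f, g⟫₂ + ⟪f, h⟫₂ := by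
  simp only [l2Inner, Pi.add_apply, inner_add_right]
  exact integral_add (integrable_inner_of_memLp_two hf hg) (integrable_inner_of_memLp_two hf hh)

lemma l2Inner_neg_right (f g : α → F) : ⟪f, -g⟫₂ = -⟪f, g⟫₂ := by
  simp only [l2Inner, Pi.neg_apply, inner_neg_right, integral_neg]

lemma abs_l2Inner_le (hf : MemLp f 2) (hg : MemLp g 2) : |⟪f, g⟫₂| ≤ ‖f‖₂ * ‖g‖₂ := by
  rw [l2Inner_eq_inner_toLp hf hg, ← norm_toLp_eq_lpNorm hf, ← norm_toLp_eq_lpNorm hg]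
  exact abs_real_inner_le_norm _ _

lemma lpNorm_add_sq (hf : MemLp f 2) (hg : MemLp g 2) :
    ‖f + g‖₂ ^ 2 = ‖f‖₂ ^ 2 + 2 * ⟪f, g⟫₂ + ‖g‖₂ ^ 2 := by
  rw [l2Inner_eq_inner_toLp hf hg, ← norm_toLp_eq_lpNorm hf, ← norm_toLp_eq_lpNorm hg,
    ← norm_toLp_eq_lpNorm (hf.add hg), MemLp.toLp_add, norm_add_sq_real]

lemma lpNorm_sq_add_two_mul_l2Inner_le (hf : MemLp f 2) (hg : MemLp g 2) :
    ‖f‖₂ ^ 2 + 2 * ⟪f, g⟫₂ ≤ ‖f + g‖₂ ^ 2 := by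
  rw [lpNorm_add_sq hf hg]
  exact le_add_of_nonneg_right (sq_nonneg _)

lemma integral_norm_mul_norm_le {F : Type*} [NormedAddCommGroup F] {f : α → F}
    (hf : MemLp f 2) (hk : MemLp k 2) :
    ∫ x, ‖f x‖ * ‖k x‖ ≤ ‖f‖₂ * ‖k‖₂ := by
  have := (le_abs_self _).trans (abs_l2Inner_le hf.norm hk.norm)
  rw [lpNorm_norm hf.1, lpNorm_norm hk.1] at this
  simpa [l2Inner, mul_comm] using this

lemma l2Inner_I_smul_right (f g : α → ℂ) : ⟪f, Complex.I • g⟫₂ = -⟪Complex.I • f, g⟫₂ := by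
  rw [l2Inner, l2Inner, ← integral_neg]
  congr 1; ext x
  simp [Complex.inner]
  ring

lemma l2Inner_I_smul_self (f : α → ℂ) : ⟪f, Complex.I • f⟫₂ = 0 := by
  have := l2Inner_I_smul_right f f
  rw [l2Inner_comm (Complex.I • f)] at this
  linarith

end SquareIntegrable

section Kernel

open Set Filter

lemma perp_apply_zero (x : E2) : perp x 0 = -(x 1) := rfl

lemma perp_apply_one (x : E2) : perp x 1 = x 0 := rfl

lemma perp_add (x y : E2) : perp (x + y) = perp x + perp y := by
  ext i; fin_cases i <;> simp [perp_apply_zero, perp_apply_one, add_comm]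

lemma perp_smul (c : ℝ) (x : E2) : perp (c • x) = c • perp x := by
  ext i; fin_cases i <;> simp [perp_apply_zero, perp_apply_one]

lemma perp_perp (x : E2) : perp (perp x) = -x := by
  ext i; fin_cases i <;> simp [perp_apply_zero, perp_apply_one]

lemma norm_perp (x : E2) : ‖perp x‖ = ‖x‖ := by
  simp [EuclideanSpace.norm_eq, Fin.sum_univ_two, perp_apply_zero, perp_apply_one, add_comm]

lemma continuous_perp : Continuous perp :=
  (PiLp.continuous_toLp 2 _).comp <| continuous_pi <| Fin.forall_fin_two.2
    ⟨(EuclideanSpace.proj (1 : Fin 2)).continuous.neg, (EuclideanSpace.proj (0 : Fin 2)).continuous⟩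

lemma K_neg (R : ℝ) (x : E2) : K R (-x) = -K R x := by
  rw [← neg_one_smul ℝ, K, K, perp_smul, norm_smul]
  simp

variable {R : ℝ}

lemma continuous_K (hR : 0 < R) : Continuous (K R) := by
  refine Continuous.smul (f := fun x : E2 => ((max R ‖x‖) ^ 2)⁻¹) ?_ continuous_perp
  exact ((continuous_const.max continuous_norm).pow 2).inv₀ fun x =>
    (pow_pos (lt_max_of_lt_left hR) 2).ne'

lemma norm_K_le (hR : 0 < R) (x : E2) : ‖K R x‖ ≤ R⁻¹ := by
  have hmax : 0 < max R ‖x‖ := lt_max_of_lt_left hR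
  rw [K, norm_smul, norm_perp, norm_inv, norm_pow, Real.norm_of_nonneg hmax.le]
  calc ((max R ‖x‖) ^ 2)⁻¹ * ‖x‖ ≤ ((max R ‖x‖) ^ 2)⁻¹ * max R ‖x‖ := by
        gcongr; exact le_max_right _ _
    _ = (max R ‖x‖)⁻¹ := by field_simp
    _ ≤ R⁻¹ := by gcongr; exact le_max_left _ _

variable {ρ σ : E2 → ℝ} {F G : E2 → E2}

lemma norm_smul_K_le (hR : 0 < R) (ρ : E2 → ℝ) (x y : E2) :
    ‖ρ y • K R (x - y)‖ ≤ R⁻¹ * |ρ y| := by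
  rw [norm_smul, mul_comm]
  exact mul_le_mul_of_nonneg_right (norm_K_le hR _) (abs_nonneg _)

lemma abs_inner_K_le (hR : 0 < R) (F : E2 → E2) (x y : E2) :
    |⟪K R (x - y), F y⟫| ≤ R⁻¹ * ‖F y‖ :=
  (abs_real_inner_le_norm _ _).trans
    (mul_le_mul_of_nonneg_right (norm_K_le hR _) (norm_nonneg _))

lemma integrable_smul_K (hR : 0 < R) (hρ : Integrable ρ) (x : E2) :
    Integrable fun y => ρ y • K R (x - y) :=
  hρ.smul_bdd R⁻¹ ((continuous_K hR).comp (by fun_prop)).aestronglyMeasurable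
    (Eventually.of_forall fun _ => norm_K_le hR _)

lemma integrable_inner_K (hR : 0 < R) (hF : Integrable F) (x : E2) :
    Integrable fun y => ⟪K R (x - y), F y⟫ :=
  (hF.norm.const_mul R⁻¹).mono'
    (((continuous_K hR).comp (by fun_prop)).aestronglyMeasurable.inner hF.1)
    (Eventually.of_forall (abs_inner_K_le hR F x))

lemma norm_convKs_le (hR : 0 < R) (hρ : Integrable ρ) (x : E2) :
    ‖convKs R ρ x‖ ≤ R⁻¹ * ∫ y, |ρ y| := by
  rw [← integral_const_mul]
  exact norm_integral_le_of_norm_le (hρ.abs.const_mul _)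
    (Eventually.of_forall (norm_smul_K_le hR ρ x))

lemma abs_convKv_le (hR : 0 < R) (hF : Integrable F) (x : E2) :
    |convKv R F x| ≤ R⁻¹ * ∫ y, ‖F y‖ := by
  rw [← integral_const_mul, ← Real.norm_eq_abs]
  exact norm_integral_le_of_norm_le (hF.norm.const_mul _)
    (Eventually.of_forall (abs_inner_K_le hR F x))

lemma continuous_convKs (hR : 0 < R) (hρ : Integrable ρ) : Continuous (convKs R ρ) :=
  continuous_of_dominated (fun x => (integrable_smul_K hR hρ x).1)
    (fun x => Eventually.of_forall (norm_smul_K_le hR ρ x)) (hρ.abs.const_mul _)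
    (Eventually.of_forall fun y => ((continuous_K hR).comp (by fun_prop)).const_smul (ρ y))

lemma continuous_convKv (hR : 0 < R) (hF : Integrable F) : Continuous (convKv R F) :=
  continuous_of_dominated (fun x => (integrable_inner_K hR hF x).1)
    (fun x => Eventually.of_forall (abs_inner_K_le hR F x)) (hF.norm.const_mul _)
    (Eventually.of_forall fun _ => ((continuous_K hR).comp (by fun_prop)).inner continuous_const)

lemma convKs_add (hR : 0 < R) (hρ : Integrable ρ) (hσ : Integrable σ) (x : E2) :
    convKs R (ρ + σ) x = convKs R ρ x + convKs R σ x := by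
  simp only [convKs, Pi.add_apply, add_smul]
  exact integral_add (integrable_smul_K hR hρ x) (integrable_smul_K hR hσ x)

lemma convKv_add (hR : 0 < R) (hF : Integrable F) (hG : Integrable G) (x : E2) :
    convKv R (F + G) x = convKv R F x + convKv R G x := by
  simp only [convKv, Pi.add_apply, inner_add_right]
  exact integral_add (integrable_inner_K hR hF x) (integrable_inner_K hR hG x)

lemma convKv_smul (c : ℝ) (F : E2 → E2) (x : E2) : convKv R (c • F) x = c * convKv R F x := by
  simp only [convKv, Pi.smul_apply, real_inner_smul_right, integral_const_mul]

lemma integral_inner_convKs (hR : 0 < R) (hρ : Integrable ρ) (hF : Integrable F) :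
    ∫ x, ⟪convKs R ρ x, F x⟫ = -∫ y, ρ y * convKv R F y := by
  have hleft x : ⟪convKs R ρ x, F x⟫ = ∫ y, ρ y * ⟪K R (x - y), F x⟫ := by
    rw [real_inner_comm, convKs, ← integral_inner (integrable_smul_K hR hρ x)]
    simp only [real_inner_smul_right, real_inner_comm (F x)]
  have hright y : ρ y * convKv R F y = -∫ x, ρ y * ⟪K R (x - y), F x⟫ := by
    rw [convKv, ← integral_const_mul, ← integral_neg]
    congr with x
    rw [← neg_sub x y, K_neg, inner_neg_left]
    ring
  simp only [hleft, hright, integral_neg, neg_neg]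
  refine integral_integral_swap ?_
  refine ((hF.norm.mul_prod hρ.abs).const_mul R⁻¹).mono' ?_ (Eventually.of_forall fun p => ?_)
  · exact hρ.1.comp_snd.mul
      (((continuous_K hR).comp (by fun_prop)).aestronglyMeasurable.inner hF.1.comp_fst)
  · calc ‖ρ p.2 * ⟪K R (p.1 - p.2), F p.1⟫‖ = |ρ p.2| * |⟪K R (p.1 - p.2), F p.1⟫| := norm_mul _ _
      _ ≤ |ρ p.2| * (R⁻¹ * ‖F p.1‖) := by
          gcongr
          exact (abs_real_inner_le_norm _ _).trans (by gcongr; exact norm_K_le hR _)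
      _ = R⁻¹ * (‖F p.1‖ * |ρ p.2|) := by ring

end Kernel

section DivergenceFree

open Set Filter

lemma integral_comp_of_measurePreserving {X Y E : Type*} [MeasurableSpace X] [MeasurableSpace Y]
    {μ : Measure X} {ν : Measure Y} [NormedAddCommGroup E] [NormedSpace ℝ E] {T : X → Y}
    (hT : MeasurePreserving T μ ν) {G : Y → E} (hG : AEStronglyMeasurable G ν) :
    ∫ x, G (T x) ∂μ = ∫ y, G y ∂ν := by
  rw [← hT.map_eq] at hG ⊢
  exact (integral_map hT.aemeasurable hG).symm

lemma integral_eq_zero_of_intervalIntegral_comp_eq_zero {X E : Type*} [TopologicalSpace X]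
    [MeasureSpace X] [OpensMeasurableSpace X] [SecondCountableTopology X]
    [SFinite (volume : Measure X)] [NormedAddCommGroup E] [NormedSpace ℝ E] [CompleteSpace E]
    [SecondCountableTopology E] {T : ℝ → X → X} {G : X → E} {a b : ℝ} (hab : a < b)
    (hT : ∀ s, MeasurePreserving (T s)) (hT_cont : Continuous fun p : ℝ × X => T p.1 p.2)
    (hG : Integrable G) (hG_cont : Continuous G) (hzero : ∀ y, ∫ s in a..b, G (T s y) = 0) :
    ∫ y, G y = 0 := by
  have hprod : Integrable (Function.uncurry fun s y => G (T s y))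
      ((volume.restrict (Ioc a b)).prod volume) := by
    refine (integrable_prod_iff (hG_cont.comp hT_cont).aestronglyMeasurable).2
      ⟨Eventually.of_forall fun s => (hT s).integrable_comp_of_integrable hG, ?_⟩
    exact (integrable_const (∫ y, ‖G y‖)).congr (Eventually.of_forall fun s =>
      (integral_comp_of_measurePreserving (hT s) hG.1.norm).symm)
  have hswap := integral_integral_swap hprod
  simp only [integral_comp_of_measurePreserving (hT _) hG.1,
    ← intervalIntegral.integral_of_le hab.le, hzero, integral_zero] at hswap
  rw [intervalIntegral.integral_const] at hswap
  exact (smul_eq_zero.1 hswap).resolve_left (sub_pos.2 hab).ne'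

lemma intervalIntegral_fderiv_eq_zero_of_closed {E F : Type*} [NormedAddCommGroup E]
    [NormedSpace ℝ E] [NormedAddCommGroup F] [NormedSpace ℝ F] [CompleteSpace F] {φ : E → F}
    (hφ : ContDiff ℝ 1 φ) {γ γ' : ℝ → E} (hγ : ∀ s, HasDerivAt γ (γ' s) s) (hγ' : Continuous γ')
    {a b : ℝ} (hclosed : γ a = γ b) : ∫ s in a..b, fderiv ℝ φ (γ s) (γ' s) = 0 := by
  have hγ_cont : Continuous γ := continuous_iff_continuousAt.2 fun s => (hγ s).continuousAt
  have hcont : Continuous fun s => fderiv ℝ φ (γ s) (γ' s) :=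
    ((hφ.continuous_fderiv one_ne_zero).comp hγ_cont).clm_apply hγ'
  rw [intervalIntegral.integral_eq_sub_of_hasDerivAt (f := fun s => φ (γ s))
    (fun s _ => (hφ.differentiable one_ne_zero (γ s)).hasFDerivAt.comp_hasDerivAt s (hγ s))
    (hcont.intervalIntegrable a b), hclosed, sub_self]

lemma inner_perp_self (x : E2) : ⟪x, perp x⟫ = 0 := by
  simp [PiLp.inner_apply, Fin.sum_univ_two, perp_apply_zero, perp_apply_one, mul_comm]

lemma norm_cos_smul_add_sin_smul_perp (s : ℝ) (x : E2) :
    ‖Real.cos s • x + Real.sin s • perp x‖ = ‖x‖ := by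
  rw [← sq_eq_sq₀ (norm_nonneg _) (norm_nonneg _), norm_add_sq_real, real_inner_smul_left,
    real_inner_smul_right, inner_perp_self, norm_smul, norm_smul, norm_perp, mul_pow, mul_pow,
    Real.norm_eq_abs, Real.norm_eq_abs, sq_abs, sq_abs]
  linear_combination ‖x‖ ^ 2 * Real.cos_sq_add_sin_sq s

/-- The rotation of the plane by the angle `s`; its orbits are integral curves of `perp`, to which
`K R` is parallel. -/
def planeRotation (s : ℝ) : E2 ≃ₗᵢ[ℝ] E2 :=
  LinearIsometry.toLinearIsometryEquiv
    { toFun := fun x => Real.cos s • x + Real.sin s • perp x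
      map_add' := fun x y => by rw [perp_add]; module
      map_smul' := fun c x => by rw [perp_smul, RingHom.id_apply]; module
      norm_map' := norm_cos_smul_add_sin_smul_perp s } rfl

lemma planeRotation_apply (s : ℝ) (x : E2) :
    planeRotation s x = Real.cos s • x + Real.sin s • perp x := rfl

lemma hasDerivAt_planeRotation (x : E2) (s : ℝ) :
    HasDerivAt (fun s => planeRotation s x) (perp (planeRotation s x)) s := by
  simp only [planeRotation_apply, perp_add, perp_smul, perp_perp, smul_neg]
  exact (((Real.hasDerivAt_cos s).smul_const x).add
    ((Real.hasDerivAt_sin s).smul_const (perp x))).congr_deriv (by module)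

lemma continuous_planeRotation : Continuous fun p : ℝ × E2 => planeRotation p.1 p.2 := by
  have := continuous_perp
  simp only [planeRotation_apply]
  fun_prop

variable {R : ℝ} {φ : E2 → ℝ}

lemma integral_fderiv_planeRotation_eq_zero (hφ : ContDiff ℝ 1 φ) (x y : E2) :
    ∫ s in (0)..(2 * Real.pi),
      fderiv ℝ φ (x - planeRotation s y) (K R (planeRotation s y)) = 0 := by
  have hrot : Continuous fun s => planeRotation s y :=
    continuous_iff_continuousAt.2 fun s => (hasDerivAt_planeRotation y s).continuousAt
  have hK s : K R (planeRotation s y) = -((max R ‖y‖) ^ 2)⁻¹ • -perp (planeRotation s y) := by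
    rw [K, LinearIsometryEquiv.norm_map]
    module
  have hloop := intervalIntegral_fderiv_eq_zero_of_closed hφ
    (fun s => (hasDerivAt_planeRotation y s).const_sub x) (continuous_perp.comp hrot).neg
    (a := 0) (b := 2 * Real.pi) (by simp [planeRotation_apply])
  simp only [hK, map_smul, intervalIntegral.integral_smul, hloop, smul_zero]

lemma convKv_gradient (hR : 0 < R) (hφ : ContDiff ℝ 1 φ) (hi : Integrable (gradient φ)) (x : E2) :
    convKv R (gradient φ) x = 0 := by
  have hshift y : ⟪K R (x - (x - y)), gradient φ (x - y)⟫ = fderiv ℝ φ (x - y) (K R y) := by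
    rw [show x - (x - y) = y by abel, real_inner_comm, inner_gradient_left]
  have hint := (integrable_inner_K hR hi x).comp_sub_left x
  rw [convKv, ← integral_sub_left_eq_self _ volume x]
  simp only [hshift] at hint ⊢
  exact integral_eq_zero_of_intervalIntegral_comp_eq_zero Real.two_pi_pos
    (fun s => (planeRotation s).measurePreserving) continuous_planeRotation hint
    (((hφ.continuous_fderiv one_ne_zero).comp (by fun_prop)).clm_apply (continuous_K hR))
    (integral_fderiv_planeRotation_eq_zero hφ x)

end DivergenceFree

section Gauge

open Complex LineDeriv

lemma fderiv_apply_e2 (f : SchwartzMap E2 ℂ) (x : E2) (j : Fin 2) :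
    fderiv ℝ f x (e2 j) = ∂_{e2 j} f x := (SchwartzMap.lineDerivOp_apply_eq_fderiv _ f x).symm

lemma sum_smul_e2 (v : E2) : ∑ j, v j • e2 j = v := by
  ext i; fin_cases i <;> simp [e2]

lemma fderiv_apply_eq_sum (f : SchwartzMap E2 ℂ) (x v : E2) :
    fderiv ℝ f x v = ∑ j, v j • ∂_{e2 j} f x := by
  conv_lhs => rw [← sum_smul_e2 v]
  simp only [map_sum, map_smul, fderiv_apply_e2]

lemma lap_eq_sum (f : SchwartzMap E2 ℂ) (x : E2) :
    lap f x = ∑ j, ∂_{e2 j} (∂_{e2 j} f) x := by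
  simp only [lap, fderiv_apply_e2]

lemma gradient_apply (φ : E2 → ℝ) (x : E2) (j : Fin 2) :
    gradient φ x j = fderiv ℝ φ x (e2 j) := by
  rw [← inner_gradient_left, e2, EuclideanSpace.inner_single_right]
  simp

/-- The vector field `Re (f̄ ∇g)`. -/
def innerGrad (f g : SchwartzMap E2 ℂ) (x : E2) : E2 :=
  WithLp.toLp 2 fun j => ⟪f x, ∂_{e2 j} g x⟫

lemma norm_le_sum_abs (v : E2) : ‖v‖ ≤ ∑ j, |v j| := by
  conv_lhs => rw [← sum_smul_e2 v]
  refine (norm_sum_le _ _).trans (Finset.sum_le_sum fun j _ => ?_)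
  simp [norm_smul, e2]

lemma norm_innerGrad_le (f g : SchwartzMap E2 ℂ) (x : E2) :
    ‖innerGrad f g x‖ ≤ ∑ j, ‖f x‖ * ‖∂_{e2 j} g x‖ :=
  (norm_le_sum_abs _).trans (Finset.sum_le_sum fun _ _ => abs_real_inner_le_norm _ _)

lemma continuous_innerGrad (f g : SchwartzMap E2 ℂ) : Continuous (innerGrad f g) :=
  (PiLp.continuous_toLp 2 _).comp <| continuous_pi fun _ =>
    f.continuous.inner (SchwartzMap.continuous _)

lemma integrable_innerGrad (f g : SchwartzMap E2 ℂ) : Integrable (innerGrad f g) :=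
  (integrable_finsetSum _ fun j _ => integrable_norm_mul_norm (f.memLp 2)
    ((∂_{e2 j} g).memLp 2)).mono' (continuous_innerGrad f g).aestronglyMeasurable
    (Filter.Eventually.of_forall (norm_innerGrad_le f g))

lemma contDiff_one_inner (f g : SchwartzMap E2 ℂ) : ContDiff ℝ 1 fun x => ⟪f x, g x⟫ :=
  (f.smooth 1).inner ℝ (g.smooth 1)

lemma gradient_inner (f g : SchwartzMap E2 ℂ) :
    gradient (fun x => ⟪f x, g x⟫) = innerGrad f g + innerGrad g f := by
  ext x j
  rw [gradient_apply, fderiv_inner_apply ℝ f.differentiableAt g.differentiableAt,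
    fderiv_apply_e2, fderiv_apply_e2, real_inner_comm (g x)]
  rfl

lemma integrable_gradient_inner (f g : SchwartzMap E2 ℂ) :
    Integrable (gradient fun x => ⟪f x, g x⟫) := by
  rw [gradient_inner]
  exact (integrable_innerGrad f g).add (integrable_innerGrad g f)

/-- Bounded continuous vector potentials that are divergence free in the weak sense; `K_R ∗ ρ`
is the example of interest. -/
structure IsCoulombGauge (A : E2 → E2) : Prop where
  continuous : Continuous A
  bounded : ∃ C, ∀ x, ‖A x‖ ≤ C
  integral_inner_gradient : ∀ φ : E2 → ℝ, ContDiff ℝ 1 φ → Integrable (gradient φ) →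
    ∫ x, ⟪A x, gradient φ x⟫ = 0

lemma isCoulombGauge_convKs {R : ℝ} (hR : 0 < R) {ρ : E2 → ℝ} (hρ : Integrable ρ) :
    IsCoulombGauge (convKs R ρ) where
  continuous := continuous_convKs hR hρ
  bounded := ⟨_, norm_convKs_le hR hρ⟩
  integral_inner_gradient φ hφ hi := by
    rw [integral_inner_convKs hR hρ hi]
    simp only [convKv_gradient hR hφ hi, mul_zero, integral_zero, neg_zero]

lemma memLp_lap (f : SchwartzMap E2 ℂ) : MemLp (lap f) 2 := by
  rw [funext (lap_eq_sum f)]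
  exact memLp_finsetSum _ fun j _ => (∂_{e2 j} (∂_{e2 j} f)).memLp 2

/-- The component `-i∂ⱼ + βAⱼ` of the magnetic momentum. -/
def magneticDeriv (β : ℝ) (A : E2 → E2) (j : Fin 2) (f : SchwartzMap E2 ℂ) (x : E2) : ℂ :=
  -I * ∂_{e2 j} f x + β • A x j • f x

/-- The magnetic Laplacian `(-i∇ + βA)²`, expanded using `∇ · A = 0`. -/
def magneticLaplacian (β : ℝ) (A : E2 → E2) (f : E2 → ℂ) (x : E2) : ℂ :=
  -(lap f x) - 2 * β * I * fderiv ℝ f x (A x) + (β ^ 2 * ‖A x‖ ^ 2) • f x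

lemma memLp_smul_of_bounded {a : E2 → ℝ} {f : E2 → ℂ} (ha : Continuous a)
    (hbdd : ∃ C, ∀ x, |a x| ≤ C) (hf : MemLp f 2) : MemLp (fun x => a x • f x) 2 := by
  obtain ⟨C, hC⟩ := hbdd
  refine hf.of_le_mul (c := C) (ha.aestronglyMeasurable.smul hf.1)
    (Filter.Eventually.of_forall fun x => ?_)
  rw [norm_smul]
  exact mul_le_mul_of_nonneg_right (hC x) (norm_nonneg _)

lemma IsCoulombGauge.memLp_apply_smul {A : E2 → E2} (hA : IsCoulombGauge A) (j : Fin 2)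
    {f : E2 → ℂ} (hf : MemLp f 2) : MemLp (fun x => A x j • f x) 2 := by
  obtain ⟨C, hC⟩ := hA.bounded
  exact memLp_smul_of_bounded ((EuclideanSpace.proj j).continuous.comp hA.continuous)
    ⟨C, fun x => (PiLp.norm_apply_le (A x) j).trans (hC x)⟩ hf

namespace IsCoulombGauge

variable {A : E2 → E2} (β : ℝ) (f : SchwartzMap E2 ℂ)

lemma integrable_inner (hA : IsCoulombGauge A) {F : E2 → E2} (hF : Integrable F) :
    Integrable fun x => ⟪A x, F x⟫ := by
  obtain ⟨C, hC⟩ := hA.bounded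
  refine (hF.norm.const_mul C).mono' (hA.continuous.aestronglyMeasurable.inner hF.1)
    (Filter.Eventually.of_forall fun x => (norm_inner_le_norm _ _).trans ?_)
  gcongr
  exact hC x

lemma memLp_fderiv_apply (hA : IsCoulombGauge A) : MemLp (fun x => fderiv ℝ f x (A x)) 2 := by
  simp only [fderiv_apply_eq_sum]
  exact memLp_finsetSum _ fun j _ => hA.memLp_apply_smul j ((∂_{e2 j} f).memLp 2)

lemma memLp_magneticDeriv (hA : IsCoulombGauge A) (j : Fin 2) :
    MemLp (magneticDeriv β A j f) 2 :=
  (((∂_{e2 j} f).memLp 2).const_mul (-I)).add ((hA.memLp_apply_smul j (f.memLp 2)).const_smul β)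

lemma memLp_norm_sq_smul (hA : IsCoulombGauge A) {f : E2 → ℂ} (hf : MemLp f 2) :
    MemLp (fun x => (β ^ 2 * ‖A x‖ ^ 2) • f x) 2 := by
  obtain ⟨C, hC⟩ := hA.bounded
  have hcont := hA.continuous
  refine memLp_smul_of_bounded (by fun_prop) ⟨β ^ 2 * C ^ 2, fun x => ?_⟩ hf
  rw [abs_of_nonneg (by positivity)]
  gcongr
  exact hC x

lemma memLp_magneticLaplacian (hA : IsCoulombGauge A) : MemLp (magneticLaplacian β A f) 2 :=
  ((memLp_lap f).neg.sub ((hA.memLp_fderiv_apply f).const_mul _)).add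
    (hA.memLp_norm_sq_smul β (f.memLp 2))

end IsCoulombGauge

lemma integrable_inner_schwartz (f g : SchwartzMap E2 ℂ) : Integrable fun x => ⟪f x, g x⟫ :=
  integrable_inner_of_memLp_two (f.memLp 2) (g.memLp 2)

lemma integrable_sum_inner_lineDeriv_add_inner_lap (f g : SchwartzMap E2 ℂ) :
    Integrable fun x => ∑ j, ⟪∂_{e2 j} f x, ∂_{e2 j} g x⟫ + ⟪lap f x, g x⟫ :=
  (integrable_finsetSum _ fun _ _ => integrable_inner_schwartz _ _).add
    (integrable_inner_of_memLp_two (memLp_lap f) (g.memLp 2))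

lemma integral_sum_inner_lineDeriv_add_inner_lap (f g : SchwartzMap E2 ℂ) :
    ∫ x, (∑ j, ⟪∂_{e2 j} f x, ∂_{e2 j} g x⟫ + ⟪lap f x, g x⟫) = 0 := by
  have hparts j : ∫ x, (⟪∂_{e2 j} f x, ∂_{e2 j} g x⟫ + ⟪∂_{e2 j} (∂_{e2 j} f) x, g x⟫) = 0 := by
    have hibp : ∫ x, ⟪∂_{e2 j} f x, ∂_{e2 j} g x⟫ = -∫ x, ⟪∂_{e2 j} (∂_{e2 j} f) x, g x⟫ :=
      SchwartzMap.integral_bilinear_lineDerivOp_right_eq_neg_left (∂_{e2 j} f) g (innerSL ℝ) (e2 j)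
    rw [integral_add (integrable_inner_schwartz _ _) (integrable_inner_schwartz _ _), hibp,
      neg_add_cancel]
  have hsum x : ∑ j, ⟪∂_{e2 j} f x, ∂_{e2 j} g x⟫ + ⟪lap f x, g x⟫ =
      ∑ j, (⟪∂_{e2 j} f x, ∂_{e2 j} g x⟫ + ⟪∂_{e2 j} (∂_{e2 j} f) x, g x⟫) := by
    rw [lap_eq_sum, sum_inner, ← Finset.sum_add_distrib]
  simp only [hsum]
  rw [integral_finsetSum, Finset.sum_eq_zero fun j _ => hparts j]
  exact fun j _ => (integrable_inner_schwartz _ _).add (integrable_inner_schwartz _ _)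

lemma sum_inner_magneticDeriv (β : ℝ) (A : E2 → E2) (f g : SchwartzMap E2 ℂ) (x : E2) :
    ∑ j, ⟪magneticDeriv β A j f x, magneticDeriv β A j g x⟫ =
      ⟪magneticLaplacian β A f x, g x⟫
        + (∑ j, ⟪∂_{e2 j} f x, ∂_{e2 j} g x⟫ + ⟪lap f x, g x⟫)
        + β * ⟪A x, gradient (fun y => ⟪(I • f) y, g y⟫) x⟫ := by
  rw [gradient_inner]
  simp only [magneticDeriv, magneticLaplacian, innerGrad, fderiv_apply_eq_sum, Fin.sum_univ_two,
    PiLp.inner_apply, EuclideanSpace.real_norm_sq_eq, Pi.add_apply, PiLp.add_apply]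
  simp [Complex.inner, lineDerivOp_smul, pow_two]
  ring

theorem IsCoulombGauge.sum_l2Inner_magneticDeriv {A : E2 → E2} (hA : IsCoulombGauge A) (β : ℝ)
    (f g : SchwartzMap E2 ℂ) :
    ∑ j, ⟪magneticDeriv β A j f, magneticDeriv β A j g⟫₂ = ⟪magneticLaplacian β A f, g⟫₂ := by
  have hgauge := hA.integral_inner_gradient _ (contDiff_one_inner (I • f) g)
    (integrable_gradient_inner _ _)
  have hparts := integral_sum_inner_lineDeriv_add_inner_lap f g
  have hlap := integrable_inner_of_memLp_two (hA.memLp_magneticLaplacian β f) (g.memLp 2)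
  have hgrad := hA.integrable_inner (integrable_gradient_inner (I • f) g)
  simp only [l2Inner]
  rw [← integral_finsetSum _ fun j _ => integrable_inner_of_memLp_two
    (hA.memLp_magneticDeriv β f j) (hA.memLp_magneticDeriv β g j)]
  simp only [sum_inner_magneticDeriv]
  rw [integral_add (hlap.fun_add (integrable_sum_inner_lineDeriv_add_inner_lap f g))
    (hgrad.const_mul β), integral_add hlap (integrable_sum_inner_lineDeriv_add_inner_lap f g),
    hparts, integral_const_mul, hgauge, mul_zero, add_zero, add_zero]

end Gauge

section Nonlinearity

open Complex LineDeriv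

variable {R : ℝ}

/-- The bilinear form `K_R ∗ Re (f̄ g)` whose diagonal is the magnetic potential. -/
def polarPot (R : ℝ) (f g : E2 → ℂ) : E2 → E2 := convKs R fun y => ⟪f y, g y⟫

lemma apot_eq_convKs (R : ℝ) (u : E2 → ℂ) : Apot R u = convKs R fun y => ‖u y‖ ^ 2 := rfl

lemma apot_eq_polarPot (R : ℝ) (u : E2 → ℂ) : Apot R u = polarPot R u u := by
  simp only [apot_eq_convKs, polarPot, real_inner_self_eq_norm_sq]

lemma norm_polarPot_le (hR : 0 < R) {f g : E2 → ℂ} (hf : MemLp f 2) (hg : MemLp g 2) (x : E2) :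
    ‖polarPot R f g x‖ ≤ R⁻¹ * (‖f‖₂ * ‖g‖₂) := by
  refine (norm_convKs_le hR (integrable_inner_of_memLp_two hf hg) x).trans ?_
  gcongr
  refine (integral_mono (integrable_inner_of_memLp_two hf hg).abs
    (integrable_norm_mul_norm hf hg) fun y => abs_real_inner_le_norm _ _).trans ?_
  exact integral_norm_mul_norm_le hf hg

lemma norm_apot_le (hR : 0 < R) {u : E2 → ℂ} (hu : MemLp u 2) (x : E2) :
    ‖Apot R u x‖ ≤ R⁻¹ * (‖u‖₂ * ‖u‖₂) := by
  rw [apot_eq_polarPot]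
  exact norm_polarPot_le hR hu hu x

lemma isCoulombGauge_apot (hR : 0 < R) {u : E2 → ℂ} (hu : MemLp u 2) :
    IsCoulombGauge (Apot R u) := by
  rw [apot_eq_polarPot]
  exact isCoulombGauge_convKs hR (integrable_inner_of_memLp_two hu hu)

lemma apot_add (hR : 0 < R) {g δ : E2 → ℂ} (hg : MemLp g 2) (hδ : MemLp δ 2) (x : E2) :
    Apot R (g + δ) x = Apot R g x + (2 : ℝ) • polarPot R g δ x + polarPot R δ δ x := by
  have hgδ := integrable_inner_of_memLp_two hg hδ
  have hexpand : (fun y => ⟪(g + δ) y, (g + δ) y⟫) =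
      (fun y => ⟪g y, g y⟫) + ((fun y => ⟪g y, δ y⟫) + fun y => ⟪g y, δ y⟫)
        + fun y => ⟪δ y, δ y⟫ := by
    ext y
    simp only [Pi.add_apply, inner_add_left, inner_add_right, real_inner_comm (g y)]
    ring
  rw [apot_eq_polarPot, apot_eq_polarPot, two_smul]
  simp only [polarPot]
  rw [hexpand, convKs_add hR ((integrable_inner_of_memLp_two hg hg).add (hgδ.add hgδ))
    (integrable_inner_of_memLp_two hδ hδ), convKs_add hR (integrable_inner_of_memLp_two hg hg)
    (hgδ.add hgδ), convKs_add hR hgδ hgδ]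

lemma norm_apot_sub_le (hR : 0 < R) {u v : E2 → ℂ} (hu : MemLp u 2) (hv : MemLp v 2) (x : E2) :
    ‖Apot R u x - Apot R v x‖ ≤ R⁻¹ * (2 * ‖v‖₂ + ‖u - v‖₂) * ‖u - v‖₂ := by
  have hsplit : Apot R u x - Apot R v x =
      (2 : ℝ) • polarPot R v (u - v) x + polarPot R (u - v) (u - v) x := by
    conv_lhs => rw [← add_sub_cancel v u, apot_add hR hv (hu.sub hv)]
    abel
  rw [hsplit]
  refine (norm_add_le _ _).trans ?_
  rw [norm_smul, Real.norm_ofNat]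
  linarith [norm_polarPot_le hR hv (hu.sub hv) x, norm_polarPot_le hR (hu.sub hv) (hu.sub hv) x]

/-- An `H¹` norm, equivalent to the Hilbertian one. -/
def h1Norm (f : SchwartzMap E2 ℂ) : ℝ :=
  ‖f‖₂ + ∑ j, ‖(∂_{e2 j} f : SchwartzMap E2 ℂ)‖₂

lemma lpNorm_le_h1Norm (f : SchwartzMap E2 ℂ) : ‖f‖₂ ≤ h1Norm f :=
  le_add_of_nonneg_right (Finset.sum_nonneg fun _ _ => lpNorm_nonneg)

lemma lpNorm_lineDeriv_le_h1Norm (f : SchwartzMap E2 ℂ) (j : Fin 2) :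
    ‖(∂_{e2 j} f : SchwartzMap E2 ℂ)‖₂ ≤ h1Norm f :=
  (Finset.single_le_sum (f := fun i => ‖(∂_{e2 i} f : SchwartzMap E2 ℂ)‖₂)
    (fun _ _ => lpNorm_nonneg) (Finset.mem_univ j)).trans (le_add_of_nonneg_left lpNorm_nonneg)

lemma h1Norm_nonneg (f : SchwartzMap E2 ℂ) : 0 ≤ h1Norm f :=
  lpNorm_nonneg.trans (lpNorm_le_h1Norm f)

/-- The pointwise size `|f| + ∑ⱼ |∂ⱼf|` of the first-order jet of `f`. -/
def jetNorm (f : SchwartzMap E2 ℂ) (x : E2) : ℝ := ‖f x‖ + ∑ j, ‖∂_{e2 j} f x‖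

lemma norm_le_jetNorm (f : SchwartzMap E2 ℂ) (x : E2) : ‖f x‖ ≤ jetNorm f x :=
  le_add_of_nonneg_right (by positivity)

lemma norm_fderiv_apply_le (f : SchwartzMap E2 ℂ) (x v : E2) :
    ‖fderiv ℝ f x v‖ ≤ ‖v‖ * jetNorm f x := by
  rw [fderiv_apply_eq_sum, jetNorm, mul_add, Finset.mul_sum]
  refine le_add_of_nonneg_of_le (by positivity) ((norm_sum_le _ _).trans ?_)
  gcongr with j
  rw [norm_smul]
  gcongr
  exact PiLp.norm_apply_le v j

lemma norm_innerGrad_le_mul_jetNorm (f g : SchwartzMap E2 ℂ) (x : E2) :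
    ‖innerGrad f g x‖ ≤ ‖f x‖ * jetNorm g x := by
  refine (norm_innerGrad_le f g x).trans ?_
  rw [← Finset.mul_sum]
  exact mul_le_mul_of_nonneg_left (le_add_of_nonneg_left (norm_nonneg _)) (norm_nonneg _)

lemma integrable_norm_mul_jetNorm {f : E2 → ℂ} (hf : MemLp f 2) (g : SchwartzMap E2 ℂ) :
    Integrable fun x => ‖f x‖ * jetNorm g x := by
  simp only [jetNorm, mul_add, Finset.mul_sum]
  exact (integrable_norm_mul_norm hf (g.memLp 2)).add
    (integrable_finsetSum _ fun j _ => integrable_norm_mul_norm hf ((∂_{e2 j} g).memLp 2))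

lemma integral_norm_mul_jetNorm_le {f : E2 → ℂ} (hf : MemLp f 2) (g : SchwartzMap E2 ℂ) :
    ∫ x, ‖f x‖ * jetNorm g x ≤ ‖f‖₂ * h1Norm g := by
  have hint j := integrable_norm_mul_norm hf ((∂_{e2 j} g).memLp 2 volume)
  simp only [jetNorm, h1Norm, mul_add, Finset.mul_sum]
  rw [integral_add (integrable_norm_mul_norm hf (g.memLp 2))
    (integrable_finsetSum _ fun j _ => hint j), integral_finsetSum _ fun j _ => hint j]
  gcongr with j
  · exact integral_norm_mul_norm_le hf (g.memLp 2)
  · exact integral_norm_mul_norm_le hf ((∂_{e2 j} g).memLp 2)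

/-- The scalar field `K_R ∗ Im (f̄ ∇g)`, a bilinear form whose diagonal is half of
`K_R ∗ J[u]`. -/
def currentPot (R : ℝ) (f g : SchwartzMap E2 ℂ) : E2 → ℝ := convKv R (innerGrad (I • f) g)

lemma jf_eq_innerGrad (u : SchwartzMap E2 ℂ) : Jf u = (2 : ℝ) • innerGrad (I • u) u := by
  ext x j
  simp [Jf, innerGrad, Complex.inner, fderiv_apply_e2]
  ring

lemma currentPot_comm (hR : 0 < R) (f g : SchwartzMap E2 ℂ) (x : E2) :
    currentPot R f g x = currentPot R g f x := by
  have hswap : innerGrad g (I • f) = (-1 : ℝ) • innerGrad (I • g) f := by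
    ext x j
    simp [innerGrad, Complex.inner, lineDerivOp_smul]
    ring
  have hgrad := convKv_gradient hR (contDiff_one_inner (I • f) g)
    (integrable_gradient_inner _ _) x
  rw [gradient_inner, convKv_add hR (integrable_innerGrad _ _) (integrable_innerGrad _ _), hswap,
    convKv_smul] at hgrad
  simp only [currentPot]
  linarith

lemma currentPot_sub_left (hR : 0 < R) (f g h : SchwartzMap E2 ℂ) (x : E2) :
    currentPot R (f - g) h x = currentPot R f h x - currentPot R g h x := by
  have hsplit : innerGrad (I • f) h = innerGrad (I • (f - g)) h + innerGrad (I • g) h := by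
    ext x j
    simp [innerGrad, Complex.inner]
    ring
  simp only [currentPot]
  rw [hsplit, convKv_add hR (integrable_innerGrad _ _) (integrable_innerGrad _ _)]
  ring

lemma abs_currentPot_le (hR : 0 < R) (f g : SchwartzMap E2 ℂ) (x : E2) :
    |currentPot R f g x| ≤ R⁻¹ * (‖f‖₂ * h1Norm g) := by
  refine (abs_convKv_le hR (integrable_innerGrad _ _) x).trans ?_
  gcongr
  refine (integral_mono (integrable_innerGrad _ _).norm
    (integrable_norm_mul_jetNorm (f.memLp 2) g) fun y => ?_).trans
    (integral_norm_mul_jetNorm_le (f.memLp 2) g)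
  simpa using norm_innerGrad_le_mul_jetNorm (I • f) g y

lemma currentPot_self_sub (hR : 0 < R) (u v : SchwartzMap E2 ℂ) (x : E2) :
    currentPot R u u x - currentPot R v v x =
      currentPot R (u - v) u x + currentPot R (u - v) v x := by
  rw [currentPot_sub_left hR, currentPot_sub_left hR, currentPot_comm hR u v]
  ring

end Nonlinearity

section NonlinearEstimates

open Complex LineDeriv

variable {R : ℝ}

lemma magneticDeriv_I_smul (β : ℝ) (A : E2 → E2) (j : Fin 2) (f : SchwartzMap E2 ℂ) :
    magneticDeriv β A j (I • f) = I • magneticDeriv β A j f := by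
  ext x
  simp only [magneticDeriv, lineDerivOp_smul, smul_apply, Pi.smul_apply, smul_eq_mul,
    real_smul]
  ring

lemma schwartz_lineDerivOp_sub (f g : SchwartzMap E2 ℂ) (v : E2) :
    ∂_{v} (f - g) = ∂_{v} f - ∂_{v} g := by
  rw [sub_eq_add_neg, lineDerivOp_add, lineDerivOp_neg, sub_eq_add_neg]

lemma magneticLaplacian_sub (β : ℝ) (A : E2 → E2) (f g : SchwartzMap E2 ℂ) :
    magneticLaplacian β A (f - g : SchwartzMap E2 ℂ) =
      magneticLaplacian β A f - magneticLaplacian β A g := by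
  ext x
  simp only [magneticLaplacian, lap_eq_sum, fderiv_apply_eq_sum, schwartz_lineDerivOp_sub,
    sub_apply, Pi.sub_apply, smul_sub, Finset.sum_sub_distrib]
  ring

lemma IsCoulombGauge.l2Inner_I_smul_magneticLaplacian {A : E2 → E2} (hA : IsCoulombGauge A)
    (β : ℝ) (f : SchwartzMap E2 ℂ) : ⟪f, I • magneticLaplacian β A f⟫₂ = 0 := by
  have hsum := hA.sum_l2Inner_magneticDeriv β f (I • f)
  simp only [magneticDeriv_I_smul, l2Inner_I_smul_self, Finset.sum_const_zero] at hsum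
  rw [l2Inner_I_smul_right, l2Inner_comm, neg_eq_zero]
  exact hsum.symm

/-- The diamagnetic part `|u|² A[u]` of the gauge-invariant current of `u`. -/
def diamagneticCurrent (R : ℝ) (u : E2 → ℂ) (x : E2) : E2 := ‖u x‖ ^ 2 • Apot R u x

/-- The scalar potential by which the nonlinearity multiplies `u`, besides the magnetic
Laplacian. -/
def selfPotential (β R : ℝ) (u : SchwartzMap E2 ℂ) (x : E2) : ℝ :=
  -2 * β * (β * convKv R (diamagneticCurrent R u) x + currentPot R u u x)

/-- The operator `(-i∇ + βA[u])² + V[u]`, with coefficients frozen at `u`, acting on `f`. -/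
def meanFieldHamiltonian (β R : ℝ) (u f : SchwartzMap E2 ℂ) (x : E2) : ℂ :=
  magneticLaplacian β (Apot R u) f x + selfPotential β R u x • f x

lemma integrable_norm_sq {u : E2 → ℂ} (hu : MemLp u 2) : Integrable fun x => ‖u x‖ ^ 2 :=
  hu.integrable_norm_pow two_ne_zero

lemma continuous_apot (hR : 0 < R) (u : SchwartzMap E2 ℂ) : Continuous (Apot R u) :=
  (isCoulombGauge_apot hR (u.memLp 2)).continuous

lemma integrable_diamagneticCurrent (hR : 0 < R) (u : SchwartzMap E2 ℂ) :
    Integrable (diamagneticCurrent R u) :=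
  (integrable_norm_sq (u.memLp 2)).smul_bdd _ (continuous_apot hR u).aestronglyMeasurable
    (Filter.Eventually.of_forall fun x => norm_apot_le hR (u.memLp 2) x)

lemma cssRHS_eq_meanFieldHamiltonian (hR : 0 < R) (β : ℝ) (u : SchwartzMap E2 ℂ) :
    cssRHS β R u = meanFieldHamiltonian β R u u := by
  ext1 x
  have hsplit : (fun y => (2 * β * ‖u y‖ ^ 2) • Apot R u y + Jf u y) =
      (2 * β) • diamagneticCurrent R u + (2 : ℝ) • innerGrad (I • u) u := by
    ext1 y
    simp only [jf_eq_innerGrad, diamagneticCurrent, Pi.add_apply, Pi.smul_apply, mul_smul]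
  rw [cssRHS, hsplit, convKv_add hR ((integrable_diamagneticCurrent hR u).smul (2 * β))
    ((integrable_innerGrad _ _).smul (2 : ℝ)), convKv_smul, convKv_smul]
  simp only [meanFieldHamiltonian, magneticLaplacian, selfPotential, currentPot, real_smul]
  push_cast
  ring

lemma continuous_selfPotential (hR : 0 < R) (β : ℝ) (u : SchwartzMap E2 ℂ) :
    Continuous (selfPotential β R u) :=
  (((continuous_convKv hR (integrable_diamagneticCurrent hR u)).const_mul β).add
    (continuous_convKv hR (integrable_innerGrad _ _))).const_mul (-2 * β)

lemma exists_abs_selfPotential_le (hR : 0 < R) (β : ℝ) (u : SchwartzMap E2 ℂ) :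
    ∃ C, ∀ x, |selfPotential β R u x| ≤ C := by
  refine ⟨|(-2 * β)| * (|β| * (R⁻¹ * ∫ x, ‖diamagneticCurrent R u x‖)
    + R⁻¹ * (‖u‖₂ * h1Norm u)), fun x => ?_⟩
  rw [selfPotential, abs_mul]
  gcongr
  refine (abs_add_le _ _).trans (add_le_add ?_ (abs_currentPot_le hR u u x))
  rw [abs_mul]
  gcongr
  exact abs_convKv_le hR (integrable_diamagneticCurrent hR u) x

lemma memLp_meanFieldHamiltonian (hR : 0 < R) (β : ℝ) (u f : SchwartzMap E2 ℂ) :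
    MemLp (meanFieldHamiltonian β R u f) 2 :=
  ((isCoulombGauge_apot hR (u.memLp 2)).memLp_magneticLaplacian β f).add
    (memLp_smul_of_bounded (continuous_selfPotential hR β u) (exists_abs_selfPotential_le hR β u)
      (f.memLp 2))

lemma memLp_cssRHS (hR : 0 < R) (β : ℝ) (f : SchwartzMap E2 ℂ) : MemLp (cssRHS β R f) 2 := by
  rw [cssRHS_eq_meanFieldHamiltonian hR]
  exact memLp_meanFieldHamiltonian hR β f f

lemma meanFieldHamiltonian_sub (β R : ℝ) (u f g : SchwartzMap E2 ℂ) :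
    meanFieldHamiltonian β R u (f - g) =
      meanFieldHamiltonian β R u f - meanFieldHamiltonian β R u g := by
  ext x
  simp only [meanFieldHamiltonian, magneticLaplacian_sub, Pi.sub_apply, sub_apply, smul_sub]
  ring

lemma l2Inner_I_smul_meanFieldHamiltonian (hR : 0 < R) (β : ℝ) (u f : SchwartzMap E2 ℂ) :
    ⟪f, I • meanFieldHamiltonian β R u f⟫₂ = 0 := by
  have hgauge := isCoulombGauge_apot hR (u.memLp 2)
  have hpointwise : (fun x => ⟪f x, (I • meanFieldHamiltonian β R u f) x⟫) =
      fun x => ⟪f x, (I • magneticLaplacian β (Apot R u) f) x⟫ := by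
    ext x
    simp [meanFieldHamiltonian, Complex.inner]
    ring
  rw [l2Inner, hpointwise]
  exact hgauge.l2Inner_I_smul_magneticLaplacian β f

section Lipschitz

variable {u v : SchwartzMap E2 ℂ} {M : ℝ}

lemma lpNorm_schwartz_sub_le (hu : ‖u‖₂ ≤ M) (hv : ‖v‖₂ ≤ M) : ‖u - v‖₂ ≤ M + M :=
  (lpNorm_sub_le (u.memLp 2) (by norm_num)).trans (add_le_add hu hv)

lemma norm_apot_le_of_le (hR : 0 < R) (hu : ‖u‖₂ ≤ M) (x : E2) :
    ‖Apot R u x‖ ≤ R⁻¹ * M ^ 2 := by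
  refine (norm_apot_le hR (u.memLp 2) x).trans ?_
  rw [← sq]
  have := lpNorm_nonneg (f := u) (p := 2) (μ := volume)
  gcongr

lemma norm_apot_sub_le_of_le (hR : 0 < R) (hu : ‖u‖₂ ≤ M) (hv : ‖v‖₂ ≤ M) (x : E2) :
    ‖Apot R u x - Apot R v x‖ ≤ R⁻¹ * (4 * M) * ‖u - v‖₂ := by
  refine (norm_apot_sub_le hR (u.memLp 2) (v.memLp 2) x).trans ?_
  have hM : 2 * ‖v‖₂ + ‖u - v‖₂ ≤ 4 * M := by linarith [lpNorm_schwartz_sub_le hu hv]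
  exact mul_le_mul_of_nonneg_right (mul_le_mul_of_nonneg_left hM (by positivity)) lpNorm_nonneg

lemma norm_diamagneticCurrent_sub_le (hR : 0 < R) (hu : ‖u‖₂ ≤ M) (hv : ‖v‖₂ ≤ M) (x : E2) :
    ‖diamagneticCurrent R u x - diamagneticCurrent R v x‖ ≤
      R⁻¹ * M ^ 2 * (‖(u - v) x‖ * ‖u x‖ + ‖(u - v) x‖ * ‖v x‖)
        + R⁻¹ * (4 * M) * ‖u - v‖₂ * ‖v x‖ ^ 2 := by
  have hsplit : diamagneticCurrent R u x - diamagneticCurrent R v x =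
      (‖u x‖ ^ 2 - ‖v x‖ ^ 2) • Apot R u x + ‖v x‖ ^ 2 • (Apot R u x - Apot R v x) := by
    simp only [diamagneticCurrent]
    module
  have hsq : |‖u x‖ ^ 2 - ‖v x‖ ^ 2| ≤ ‖(u - v) x‖ * ‖u x‖ + ‖(u - v) x‖ * ‖v x‖ := by
    rw [sq_sub_sq, abs_mul, abs_of_nonneg (by positivity), mul_comm, ← mul_add]
    gcongr
    exact abs_norm_sub_norm_le _ _
  rw [hsplit]
  refine (norm_add_le _ _).trans (add_le_add ?_ ?_) <;> rw [norm_smul, mul_comm]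
  · gcongr
    exacts [norm_apot_le_of_le hR hu x, hsq]
  · rw [norm_pow, norm_norm]
    gcongr
    exact norm_apot_sub_le_of_le hR hu hv x

lemma integral_norm_diamagneticCurrent_sub_le (hR : 0 < R) (hu : ‖u‖₂ ≤ M) (hv : ‖v‖₂ ≤ M) :
    ∫ x, ‖diamagneticCurrent R u x - diamagneticCurrent R v x‖ ≤
      R⁻¹ * (6 * M ^ 3) * ‖u - v‖₂ := by
  have hM : 0 ≤ M := lpNorm_nonneg.trans hu
  have hδ := lpNorm_nonneg (f := ⇑(u - v)) (p := 2) (μ := volume)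
  have hintu := integrable_norm_mul_norm ((u - v).memLp 2 volume) (u.memLp 2 volume)
  have hintv := integrable_norm_mul_norm ((u - v).memLp 2 volume) (v.memLp 2 volume)
  have hint := (hintu.fun_add hintv).const_mul (R⁻¹ * M ^ 2)
  have hsq := (integrable_norm_sq (v.memLp 2)).const_mul (R⁻¹ * (4 * M) * ‖u - v‖₂)
  refine (integral_mono
    ((integrable_diamagneticCurrent hR u).sub (integrable_diamagneticCurrent hR v)).norm
    (hint.fun_add hsq) (norm_diamagneticCurrent_sub_le hR hu hv)).trans ?_
  rw [integral_add hint hsq, integral_const_mul, integral_const_mul, integral_add hintu hintv,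
    ← lpNorm_two_sq (v.memLp 2)]
  calc _ ≤ R⁻¹ * M ^ 2 * (‖u - v‖₂ * M + ‖u - v‖₂ * M) + R⁻¹ * (4 * M) * ‖u - v‖₂ * M ^ 2 := by
        gcongr
        · exact (integral_norm_mul_norm_le ((u - v).memLp 2) (u.memLp 2)).trans (by gcongr)
        · exact (integral_norm_mul_norm_le ((u - v).memLp 2) (v.memLp 2)).trans (by gcongr)
        · exact lpNorm_nonneg
    _ = R⁻¹ * (6 * M ^ 3) * ‖u - v‖₂ := by ring

lemma convKv_sub (hR : 0 < R) {F G : E2 → E2} (hF : Integrable F) (hG : Integrable G) (x : E2) :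
    convKv R (F - G) x = convKv R F x - convKv R G x := by
  rw [eq_sub_iff_add_eq, ← convKv_add hR (hF.sub hG) hG, sub_add_cancel]

/-- On `H¹`-balls the potential is Lipschitz for the `L²` distance: the derivative falling on
`u - v` in the current is moved to the other factor by `currentPot_comm`. -/
lemma abs_selfPotential_sub_le (hR : 0 < R) (β : ℝ) (hu : h1Norm u ≤ M) (hv : h1Norm v ≤ M)
    (x : E2) : |selfPotential β R u x - selfPotential β R v x| ≤
      2 * |β| * (|β| * (R⁻¹ * (R⁻¹ * (6 * M ^ 3))) + R⁻¹ * (2 * M)) * ‖u - v‖₂ := by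
  have hdia : |convKv R (diamagneticCurrent R u) x - convKv R (diamagneticCurrent R v) x| ≤
      R⁻¹ * (R⁻¹ * (6 * M ^ 3) * ‖u - v‖₂) := by
    have hiu := integrable_diamagneticCurrent hR u
    have hiv := integrable_diamagneticCurrent hR v
    rw [← convKv_sub hR hiu hiv]
    refine (abs_convKv_le hR (hiu.sub hiv) x).trans ?_
    gcongr
    exact integral_norm_diamagneticCurrent_sub_le hR ((lpNorm_le_h1Norm u).trans hu)
      ((lpNorm_le_h1Norm v).trans hv)
  have hcur : |currentPot R u u x - currentPot R v v x| ≤ R⁻¹ * (2 * M) * ‖u - v‖₂ := by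
    have := lpNorm_nonneg (f := ⇑(u - v)) (p := 2) (μ := volume)
    rw [currentPot_self_sub hR]
    calc _ ≤ R⁻¹ * (‖u - v‖₂ * M) + R⁻¹ * (‖u - v‖₂ * M) :=
          (abs_add_le _ _).trans (add_le_add ((abs_currentPot_le hR _ u x).trans (by gcongr))
            ((abs_currentPot_le hR _ v x).trans (by gcongr)))
      _ = R⁻¹ * (2 * M) * ‖u - v‖₂ := by ring
  have hsplit : selfPotential β R u x - selfPotential β R v x =
      -2 * β * (β * (convKv R (diamagneticCurrent R u) x - convKv R (diamagneticCurrent R v) x)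
        + (currentPot R u u x - currentPot R v v x)) := by
    simp only [selfPotential]
    ring
  calc |selfPotential β R u x - selfPotential β R v x|
      ≤ 2 * |β| * (|β| * (R⁻¹ * (R⁻¹ * (6 * M ^ 3) * ‖u - v‖₂)) + R⁻¹ * (2 * M) * ‖u - v‖₂) := by
        rw [hsplit, abs_mul, abs_mul, abs_neg, abs_two]
        gcongr
        refine (abs_add_le _ _).trans (add_le_add ?_ hcur)
        rw [abs_mul]
        gcongr
    _ = _ := by ring

end Lipschitz

end NonlinearEstimates

section Stability

open Complex LineDeriv

variable {R : ℝ}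

lemma norm_magneticLaplacian_sub_le (β : ℝ) {A B : E2 → E2} {a : ℝ} (f : SchwartzMap E2 ℂ)
    {x : E2} (hA : ‖A x‖ ≤ a) (hB : ‖B x‖ ≤ a) :
    ‖magneticLaplacian β A f x - magneticLaplacian β B f x‖ ≤
      (2 * |β| + β ^ 2 * (2 * a)) * ‖A x - B x‖ * jetNorm f x := by
  have hsplit : magneticLaplacian β A f x - magneticLaplacian β B f x =
      -(2 * β * I) * fderiv ℝ f x (A x - B x) + (β ^ 2 * (‖A x‖ ^ 2 - ‖B x‖ ^ 2)) • f x := by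
    simp only [magneticLaplacian, map_sub, mul_sub, sub_smul]
    ring
  have hsq : |‖A x‖ ^ 2 - ‖B x‖ ^ 2| ≤ 2 * a * ‖A x - B x‖ := by
    rw [sq_sub_sq, abs_mul, abs_of_nonneg (by positivity)]
    gcongr
    · linarith [norm_nonneg (B x)]
    · linarith
    · exact abs_norm_sub_norm_le _ _
  calc _ ≤ 2 * |β| * (‖A x - B x‖ * jetNorm f x)
        + β ^ 2 * (2 * a * ‖A x - B x‖) * jetNorm f x := by
        rw [hsplit]
        refine (norm_add_le _ _).trans (add_le_add ?_ ?_)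
        · rw [norm_mul]
          gcongr
          · simp
          · exact norm_fderiv_apply_le f x _
        · rw [norm_smul, norm_mul, norm_pow, Real.norm_eq_abs, sq_abs, Real.norm_eq_abs]
          exact mul_le_mul (mul_le_mul_of_nonneg_left hsq (sq_nonneg β)) (norm_le_jetNorm f x)
            (norm_nonneg _) (by have := (norm_nonneg (A x)).trans hA; positivity)
    _ = _ := by ring

lemma exists_norm_meanFieldHamiltonian_sub_le (hR : 0 < R) (β : ℝ) {M : ℝ} (hM : 0 ≤ M) :
    ∃ C, 0 ≤ C ∧ ∀ u v f : SchwartzMap E2 ℂ, h1Norm u ≤ M → h1Norm v ≤ M → ∀ x,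
      ‖meanFieldHamiltonian β R u f x - meanFieldHamiltonian β R v f x‖ ≤
        C * ‖u - v‖₂ * jetNorm f x := by
  refine ⟨(2 * |β| + β ^ 2 * (2 * (R⁻¹ * M ^ 2))) * (R⁻¹ * (4 * M))
    + 2 * |β| * (|β| * (R⁻¹ * (R⁻¹ * (6 * M ^ 3))) + R⁻¹ * (2 * M)), by positivity,
    fun u v f hu hv x => ?_⟩
  have hu' := (lpNorm_le_h1Norm u).trans hu
  have hv' := (lpNorm_le_h1Norm v).trans hv
  have hsplit : meanFieldHamiltonian β R u f x - meanFieldHamiltonian β R v f x =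
      (magneticLaplacian β (Apot R u) f x - magneticLaplacian β (Apot R v) f x)
        + (selfPotential β R u x - selfPotential β R v x) • f x := by
    simp only [meanFieldHamiltonian, sub_smul]
    ring
  rw [hsplit, add_mul, add_mul]
  refine (norm_add_le _ _).trans (add_le_add ?_ ?_)
  · refine (norm_magneticLaplacian_sub_le β f (norm_apot_le_of_le hR hu' x)
      (norm_apot_le_of_le hR hv' x)).trans ?_
    rw [mul_assoc _ (R⁻¹ * (4 * M))]
    have := (norm_nonneg _).trans (norm_le_jetNorm f x)
    gcongr
    exact norm_apot_sub_le_of_le hR hu' hv' x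
  · rw [norm_smul]
    exact mul_le_mul (abs_selfPotential_sub_le hR β hu hv x) (norm_le_jetNorm f x)
      (norm_nonneg _) ((abs_nonneg _).trans (abs_selfPotential_sub_le hR β hu hv x))

/-- The evolution is stable in `L²`: the frozen Hamiltonian is symmetric, so only the change of
its coefficients contributes. -/
theorem exists_abs_l2Inner_I_smul_cssRHS_sub_le (hR : 0 < R) (β : ℝ) {M : ℝ} (hM : 0 ≤ M) :
    ∃ C, 0 ≤ C ∧ ∀ u v : SchwartzMap E2 ℂ, h1Norm u ≤ M → h1Norm v ≤ M →
      |⟪u - v, I • (cssRHS β R u - cssRHS β R v)⟫₂| ≤ C * ‖u - v‖₂ ^ 2 := by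
  obtain ⟨C, hC, hdiff⟩ := exists_norm_meanFieldHamiltonian_sub_le hR β hM
  refine ⟨C * M, by positivity, fun u v hu hv => ?_⟩
  have hδ := (u - v).memLp 2 volume
  have hsplit : cssRHS β R u - cssRHS β R v = meanFieldHamiltonian β R u (u - v)
      + (meanFieldHamiltonian β R u v - meanFieldHamiltonian β R v v) := by
    rw [meanFieldHamiltonian_sub, cssRHS_eq_meanFieldHamiltonian hR,
      cssRHS_eq_meanFieldHamiltonian hR]
    abel
  have hrem := (memLp_meanFieldHamiltonian hR β u v).sub (memLp_meanFieldHamiltonian hR β v v)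
  rw [hsplit, smul_add, l2Inner_add_right hδ
    ((memLp_meanFieldHamiltonian hR β u (u - v)).const_smul I) (hrem.const_smul I),
    l2Inner_I_smul_meanFieldHamiltonian hR, zero_add, l2Inner, ← Real.norm_eq_abs]
  have hint := (integrable_norm_mul_jetNorm hδ v).const_mul (C * ‖u - v‖₂)
  refine (norm_integral_le_of_norm_le hint (Filter.Eventually.of_forall fun x => ?_)).trans ?_
  · refine (norm_inner_le_norm _ _).trans ?_
    rw [Pi.smul_apply, norm_smul, norm_I, one_mul, mul_left_comm]
    gcongr
    exact hdiff u v v hu hv x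
  · have := lpNorm_nonneg (f := ⇑(u - v)) (p := 2) (μ := volume)
    rw [integral_const_mul]
    calc _ ≤ C * ‖u - v‖₂ * (‖u - v‖₂ * M) := by
          gcongr
          exact (integral_norm_mul_jetNorm_le hδ v).trans (by gcongr)
      _ = C * M * ‖u - v‖₂ ^ 2 := by ring

end Stability

section Energy

open Complex LineDeriv

variable {R : ℝ}

lemma energy_eq_sum_lpNorm_magneticDeriv (hR : 0 < R) (β : ℝ) (u : SchwartzMap E2 ℂ) :
    energy β R u = ∑ j, ‖magneticDeriv β (Apot R u) j u‖₂ ^ 2 := by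
  have hmem j := (isCoulombGauge_apot hR (u.memLp 2)).memLp_magneticDeriv β u j
  simp only [lpNorm_two_sq (hmem _)]
  rw [← integral_finsetSum _ fun j _ => integrable_norm_sq (hmem j)]
  simp [energy, magneticDeriv, fderiv_apply_e2, mul_assoc]

lemma norm_apply_smul_le {A : E2 → E2} {a : ℝ} {x : E2} (hA : ‖A x‖ ≤ a) (j : Fin 2)
    (f : E2 → ℂ) : ‖A x j • f x‖ ≤ a * ‖f x‖ := by
  rw [norm_smul]
  gcongr
  exact (PiLp.norm_apply_le (A x) j).trans hA

lemma lpNorm_apply_smul_le {A : E2 → E2} {a : ℝ} (hA : ∀ x, ‖A x‖ ≤ a) (j : Fin 2) {f : E2 → ℂ}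
    (hf : MemLp f 2) : ‖fun x => A x j • f x‖₂ ≤ a * ‖f‖₂ :=
  lpNorm_le_mul_lpNorm hf ((norm_nonneg _).trans (hA 0)) fun x => norm_apply_smul_le (hA x) j f

lemma abs_lpNorm_magneticDeriv_sub_le (hR : 0 < R) (β : ℝ) (u : SchwartzMap E2 ℂ) (j : Fin 2) :
    |‖magneticDeriv β (Apot R u) j u‖₂ - ‖(∂_{e2 j} u : SchwartzMap E2 ℂ)‖₂| ≤
      |β| * (R⁻¹ * ‖u‖₂ ^ 3) := by
  have hmem := (isCoulombGauge_apot hR (u.memLp 2)).memLp_magneticDeriv β u j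
  have hdiff : magneticDeriv β (Apot R u) j u - -I • ⇑(∂_{e2 j} u : SchwartzMap E2 ℂ) =
      β • fun x => Apot R u x j • u x := by
    ext x
    simp only [magneticDeriv, Pi.sub_apply, Pi.smul_apply, smul_eq_mul]
    ring
  have hnorm : ‖-I • ⇑(∂_{e2 j} u : SchwartzMap E2 ℂ)‖₂ = ‖(∂_{e2 j} u : SchwartzMap E2 ℂ)‖₂ := by
    rw [lpNorm_const_smul]
    simp
  rw [← hnorm]
  refine (abs_lpNorm_sub_lpNorm_le hmem (((∂_{e2 j} u).memLp 2).const_smul (-I))).trans ?_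
  rw [hdiff, lpNorm_const_smul, coe_nnnorm, Real.norm_eq_abs]
  gcongr
  refine (lpNorm_apply_smul_le (norm_apot_le hR (u.memLp 2)) j (u.memLp 2)).trans_eq ?_
  ring

lemma lpNorm_magneticDeriv_le (hR : 0 < R) (β : ℝ) {u : SchwartzMap E2 ℂ} {M : ℝ}
    (hu : h1Norm u ≤ M) (j : Fin 2) :
    ‖magneticDeriv β (Apot R u) j u‖₂ ≤ M + |β| * (R⁻¹ * M ^ 3) := by
  have hu' := (lpNorm_le_h1Norm u).trans hu
  have hcube : |β| * (R⁻¹ * ‖u‖₂ ^ 3) ≤ |β| * (R⁻¹ * M ^ 3) := by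
    have := lpNorm_nonneg (f := u) (p := 2) (μ := volume)
    gcongr
  linarith [(abs_le.1 (abs_lpNorm_magneticDeriv_sub_le hR β u j)).2, hcube,
    lpNorm_lineDeriv_le_h1Norm u j]

lemma energy_le (hR : 0 < R) (β : ℝ) {u : SchwartzMap E2 ℂ} {M : ℝ} (hu : h1Norm u ≤ M) :
    energy β R u ≤ 2 * (M + |β| * (R⁻¹ * M ^ 3)) ^ 2 := by
  rw [energy_eq_sum_lpNorm_magneticDeriv hR]
  refine (Finset.sum_le_card_nsmul _ _ _ fun j _ =>
    pow_le_pow_left₀ lpNorm_nonneg (lpNorm_magneticDeriv_le hR β hu j) 2).trans_eq ?_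
  simp

lemma h1Norm_le_of_energy (hR : 0 < R) (β : ℝ) (u : SchwartzMap E2 ℂ) :
    h1Norm u ≤ ‖u‖₂ + 2 * (√(energy β R u) + |β| * (R⁻¹ * ‖u‖₂ ^ 3)) := by
  have hD j : ‖magneticDeriv β (Apot R u) j u‖₂ ≤ √(energy β R u) := by
    rw [energy_eq_sum_lpNorm_magneticDeriv hR]
    exact Real.le_sqrt_of_sq_le (Finset.single_le_sum (fun i _ =>
      sq_nonneg ‖magneticDeriv β (Apot R u) i u‖₂) (Finset.mem_univ j))
  rw [h1Norm]
  gcongr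
  refine (Finset.sum_le_card_nsmul _ _ _ fun j _ => ?_).trans_eq (nsmul_eq_mul _ _)
  linarith [(abs_le.1 (abs_lpNorm_magneticDeriv_sub_le hR β u j)).1, hD j]

/-- The first variation of the energy: the derivative of `A[g]` in the direction `δ` produces
the multiplication by `selfPotential`. -/
lemma sum_l2Inner_magneticDeriv_polarPot (hR : 0 < R) (β : ℝ) (g δ : SchwartzMap E2 ℂ) :
    ∑ j, ⟪magneticDeriv β (Apot R g) j g, (2 * β) • fun x => polarPot R g δ x j • g x⟫₂ =
      ∫ x, ⟪selfPotential β R g x • g x, δ x⟫ := by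
  have hρ := integrable_inner_schwartz g δ
  have hdia := integrable_diamagneticCurrent hR g
  have hcur := integrable_innerGrad (I • g) g
  have hgauge : IsCoulombGauge (polarPot R g δ) := isCoulombGauge_convKs hR hρ
  have hmem j := (hgauge.memLp_apply_smul j (g.memLp 2)).const_smul (2 * β)
  have hpointwise x : ∑ j, ⟪magneticDeriv β (Apot R g) j g x,
      ((2 * β) • fun x => polarPot R g δ x j • g x) x⟫ = 2 * β *
        ⟪polarPot R g δ x, (β • diamagneticCurrent R g + innerGrad (I • g) g) x⟫ := by
    simp [magneticDeriv, diamagneticCurrent, innerGrad, Complex.inner, Fin.sum_univ_two,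
      PiLp.inner_apply, Complex.sq_norm, normSq_apply]
    ring
  simp only [l2Inner]
  rw [← integral_finsetSum _ fun j _ => integrable_inner_of_memLp_two
    ((isCoulombGauge_apot hR (g.memLp 2)).memLp_magneticDeriv β g j) (hmem j)]
  simp only [hpointwise]
  rw [integral_const_mul, polarPot, integral_inner_convKs hR hρ ((hdia.smul β).add hcur),
    ← integral_neg, ← integral_const_mul]
  refine integral_congr_ae (Filter.Eventually.of_forall fun x => ?_)
  simp only [convKv_add hR (hdia.smul β) hcur, convKv_smul, selfPotential, currentPot,
    real_inner_smul_left]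
  ring


lemma sum_l2Inner_magneticDeriv_add_polarPot (hR : 0 < R) (β : ℝ) (g δ : SchwartzMap E2 ℂ) :
    ∑ j, ⟪magneticDeriv β (Apot R g) j g, magneticDeriv β (Apot R g) j δ +
      (2 * β) • fun x => polarPot R g δ x j • g x⟫₂ = ⟪cssRHS β R g, δ⟫₂ := by
  have hA := isCoulombGauge_apot hR (g.memLp 2)
  have hpol : IsCoulombGauge (polarPot R g δ) :=
    isCoulombGauge_convKs hR (integrable_inner_schwartz g δ)
  have hV : MemLp (fun x => selfPotential β R g x • g x) 2 :=
    memLp_smul_of_bounded (continuous_selfPotential hR β g)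
      (exists_abs_selfPotential_le hR β g) (g.memLp 2)
  have hadd : meanFieldHamiltonian β R g g =
      magneticLaplacian β (Apot R g) g + fun x => selfPotential β R g x • g x := rfl
  simp only [l2Inner_add_right (hA.memLp_magneticDeriv β g _) (hA.memLp_magneticDeriv β δ _)
    ((hpol.memLp_apply_smul _ (g.memLp 2)).const_smul (2 * β))]
  rw [Finset.sum_add_distrib, hA.sum_l2Inner_magneticDeriv, sum_l2Inner_magneticDeriv_polarPot hR,
    cssRHS_eq_meanFieldHamiltonian hR, hadd, l2Inner_comm _ δ, l2Inner_comm _ δ,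
    l2Inner_add_right (δ.memLp 2) (hA.memLp_magneticLaplacian β g) hV, l2Inner_comm δ,
    l2Inner_comm δ fun x => selfPotential β R g x • g x]
  rfl

lemma lpNorm_polarPot_apply_smul_le (hR : 0 < R) (f g h : SchwartzMap E2 ℂ) (j : Fin 2) :
    ‖fun x => polarPot R f g x j • h x‖₂ ≤ R⁻¹ * (‖f‖₂ * ‖g‖₂) * ‖h‖₂ :=
  lpNorm_apply_smul_le (norm_polarPot_le hR (f.memLp 2) (g.memLp 2)) j (h.memLp 2)

/-- The part of `magneticDeriv β A[g + δ] j (g + δ)` that is quadratic and cubic in `δ`. -/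
def magneticDerivRemainder (β R : ℝ) (g δ : SchwartzMap E2 ℂ) (j : Fin 2) : E2 → ℂ :=
  (2 * β) • (fun x => polarPot R g δ x j • δ x) + β • fun x => polarPot R δ δ x j • (g + δ) x

lemma magneticDeriv_apot_add (hR : 0 < R) (β : ℝ) (g δ : SchwartzMap E2 ℂ) (j : Fin 2) :
    magneticDeriv β (Apot R (g + δ : SchwartzMap E2 ℂ)) j (g + δ) =
      magneticDeriv β (Apot R g) j g + ((magneticDeriv β (Apot R g) j δ +
        (2 * β) • fun x => polarPot R g δ x j • g x) + magneticDerivRemainder β R g δ j) := by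
  ext x
  have hA : Apot R (g + δ : SchwartzMap E2 ℂ) x =
      Apot R g x + (2 : ℝ) • polarPot R g δ x + polarPot R δ δ x :=
    apot_add hR (g.memLp 2) (δ.memLp 2) x
  simp only [magneticDeriv, magneticDerivRemainder, lineDerivOp_add, add_apply, Pi.add_apply,
    Pi.smul_apply, hA, PiLp.add_apply, PiLp.smul_apply, real_smul, smul_eq_mul]
  push_cast
  ring

lemma memLp_magneticDerivRemainder (hR : 0 < R) (β : ℝ) (g δ : SchwartzMap E2 ℂ) (j : Fin 2) :
    MemLp (magneticDerivRemainder β R g δ j) 2 := by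
  have hpol (f : SchwartzMap E2 ℂ) : IsCoulombGauge (polarPot R f δ) :=
    isCoulombGauge_convKs hR (integrable_inner_schwartz f δ)
  exact (((hpol g).memLp_apply_smul j (δ.memLp 2)).const_smul (2 * β)).add
    (((hpol δ).memLp_apply_smul j ((g + δ).memLp 2)).const_smul β)

lemma lpNorm_magneticDerivRemainder_le (hR : 0 < R) (β : ℝ) {g δ : SchwartzMap E2 ℂ} {M : ℝ}
    (hg : ‖g‖₂ ≤ M) (hu : ‖g + δ‖₂ ≤ M) (j : Fin 2) :
    ‖magneticDerivRemainder β R g δ j‖₂ ≤ 3 * |β| * R⁻¹ * M * ‖δ‖₂ ^ 2 := by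
  have hpol (f : SchwartzMap E2 ℂ) : IsCoulombGauge (polarPot R f δ) :=
    isCoulombGauge_convKs hR (integrable_inner_schwartz f δ)
  have hquad : ‖fun x => polarPot R g δ x j • δ x‖₂ ≤ R⁻¹ * M * ‖δ‖₂ ^ 2 := by
    refine (lpNorm_polarPot_apply_smul_le hR g δ δ j).trans ?_
    rw [← mul_assoc, mul_assoc (R⁻¹ * _), ← sq]
    gcongr
  have hcubic : ‖fun x => polarPot R δ δ x j • (g + δ) x‖₂ ≤ R⁻¹ * M * ‖δ‖₂ ^ 2 := by
    refine (lpNorm_polarPot_apply_smul_le hR δ δ (g + δ) j).trans ?_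
    rw [← sq, mul_right_comm]
    gcongr
  refine (lpNorm_add_le (((hpol g).memLp_apply_smul j (δ.memLp 2)).const_smul (2 * β))
    one_le_two).trans ?_
  rw [lpNorm_const_smul, lpNorm_const_smul, coe_nnnorm, coe_nnnorm, norm_mul, Real.norm_two,
    Real.norm_eq_abs]
  calc _ ≤ 2 * |β| * (R⁻¹ * M * ‖δ‖₂ ^ 2) + |β| * (R⁻¹ * M * ‖δ‖₂ ^ 2) := by gcongr
    _ = _ := by ring

lemma exists_energy_taylor_le (hR : 0 < R) (β : ℝ) {M : ℝ} (hM : 0 ≤ M) :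
    ∃ C, 0 ≤ C ∧ ∀ u g : SchwartzMap E2 ℂ, h1Norm u ≤ M → h1Norm g ≤ M →
      energy β R g + 2 * ⟪cssRHS β R g, (u - g : SchwartzMap E2 ℂ)⟫₂ - C * ‖u - g‖₂ ^ 2 ≤
        energy β R u := by
  set D := M + |β| * (R⁻¹ * M ^ 3)
  set S := 3 * |β| * R⁻¹ * M
  refine ⟨2 * (2 * (D * S)), by positivity, fun u g hu hg => ?_⟩
  obtain ⟨δ, rfl⟩ : ∃ δ, u = g + δ := ⟨u - g, by abel⟩
  have hA := isCoulombGauge_apot hR (g.memLp 2)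
  have hpol : IsCoulombGauge (polarPot R g δ) :=
    isCoulombGauge_convKs hR (integrable_inner_schwartz g δ)
  have hP j := hA.memLp_magneticDeriv β g j
  have hQ j := (hA.memLp_magneticDeriv β δ j).add
    ((hpol.memLp_apply_smul j (g.memLp 2)).const_smul (2 * β))
  have hS j := memLp_magneticDerivRemainder hR β g δ j
  have hremainder j : -(D * S * ‖δ‖₂ ^ 2) ≤
      ⟪magneticDeriv β (Apot R g) j g, magneticDerivRemainder β R g δ j⟫₂ := by
    refine neg_le_of_abs_le ((abs_l2Inner_le (hP j) (hS j)).trans ?_)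
    rw [mul_assoc D]
    exact mul_le_mul (lpNorm_magneticDeriv_le hR β hg j)
      (lpNorm_magneticDerivRemainder_le hR β ((lpNorm_le_h1Norm g).trans hg)
        ((lpNorm_le_h1Norm (g + δ)).trans hu) j) lpNorm_nonneg (by positivity)
  have hsum := Finset.sum_le_sum fun j (_ : j ∈ Finset.univ) =>
    lpNorm_sq_add_two_mul_l2Inner_le (hP j) ((hQ j).add (hS j))
  simp only [l2Inner_add_right (hP _) (hQ _) (hS _), mul_add, Finset.sum_add_distrib,
    ← Finset.mul_sum, sum_l2Inner_magneticDeriv_add_polarPot hR] at hsum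
  simp only [add_sub_cancel_left, energy_eq_sum_lpNorm_magneticDeriv hR, magneticDeriv_apot_add hR]
  have hrem := Finset.sum_le_sum fun j (_ : j ∈ Finset.univ) => hremainder j
  rw [Finset.sum_const, Finset.card_fin, two_nsmul] at hrem
  linarith

end Energy

section TimeDependence

open Set Filter Topology Function

variable {α F : Type*} [MeasureSpace α] [NormedAddCommGroup F]

lemma lowerSemicontinuous_lpNorm {X : Type*} [TopologicalSpace X] [SequentialSpace X]
    {f : X → α → F} (hf : ∀ t, MemLp (f t) 2) (hcont : ∀ x, Continuous fun t => f t x) :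
    LowerSemicontinuous fun t => ‖f t‖₂ := by
  refine lowerSemicontinuous_iff_isClosed_preimage.2 fun y => IsSeqClosed.isClosed ?_
  intro t t₀ ht hlim
  have hy : 0 ≤ y := lpNorm_nonneg.trans (ht 0)
  have hle n : eLpNorm (f (t n)) 2 volume ≤ ENNReal.ofReal y := by
    rw [← ofReal_lpNorm (hf _)]
    exact ENNReal.ofReal_le_ofReal (ht n)
  have hfatou := (Lp.eLpNorm_lim_le_liminf_eLpNorm (p := 2) (fun n => (hf (t n)).1) (f t₀)
    (Eventually.of_forall fun x => ((hcont x).tendsto t₀).comp hlim)).trans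
    (liminf_le_of_le (by isBoundedDefault) fun b hb => hb.exists.elim fun n hn => hn.trans (hle n))
  rw [← ofReal_lpNorm (hf t₀)] at hfatou
  exact (ENNReal.ofReal_le_ofReal_iff hy).1 hfatou

variable {E : Type*} [NormedAddCommGroup E] [MeasureSpace E] [BorelSpace E]
  [IsFiniteMeasureOnCompacts (volume : Measure E)] [InnerProductSpace ℝ F]
  {f f' : ℝ → E → F}

lemma hasDerivAt_l2Inner_of_hasCompactSupport (hf : ∀ t, MemLp (f t) 2)
    (hf' : ∀ t, MemLp (f' t) 2) (hderiv : ∀ t x, HasDerivAt (fun s => f s x) (f' t x) t)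
    (hcont : Continuous (uncurry f')) {φ : E → F} (hφ : MemLp φ 2) (hφ_cont : Continuous φ)
    (hφ_supp : HasCompactSupport φ) (t : ℝ) : HasDerivAt (fun s => ⟪φ, f s⟫₂) ⟪φ, f' t⟫₂ t := by
  obtain ⟨c, hc⟩ := ((isCompact_closedBall t 1).prod hφ_supp).exists_bound_of_continuousOn
    hcont.continuousOn
  refine (hasDerivAt_integral_of_dominated_loc_of_deriv_le (bound := fun x => ‖φ x‖ * c)
    (F' := fun s x => ⟪φ x, f' s x⟫) (Metric.closedBall_mem_nhds t one_pos)
    (Eventually.of_forall fun s => hφ.1.inner (hf s).1) (integrable_inner_of_memLp_two hφ (hf t))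
    (hφ.1.inner (hf' t).1) (Eventually.of_forall fun x s hs => ?_)
    ((hφ_cont.norm.integrable_of_hasCompactSupport hφ_supp.norm).mul_const c)
    (Eventually.of_forall fun x s _ => ?_)).2
  · by_cases hx : x ∈ tsupport φ
    · exact (norm_inner_le_norm _ _).trans (by gcongr; exact hc (s, x) ⟨hs, hx⟩)
    · simp [image_eq_zero_of_notMem_tsupport hx]
  · simpa using (hasDerivAt_const s (φ x)).inner ℝ (hderiv s x)

theorem hasWeakDerivOn_toLp [NormedSpace ℝ E] [FiniteDimensional ℝ E] (hf : ∀ t, MemLp (f t) 2)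
    (hf' : ∀ t, MemLp (f' t) 2) (hderiv : ∀ t x, HasDerivAt (fun s => f s x) (f' t x) t)
    (hcont : Continuous (uncurry f')) {s : Set ℝ} (hs : Convex ℝ s) {M : ℝ}
    (hM : ∀ t ∈ s, ‖f' t‖₂ ≤ M) :
    HasWeakDerivOn (fun t => (hf t).toLp (f t)) (fun t => (hf' t).toLp (f' t)) s := by
  refine HasWeakDerivOn.of_dense (Lp.dense_hasCompactSupport_contDiff (by simp))
    (fun t _ g hg => ?_) hs fun t ht => (norm_toLp_eq_lpNorm (hf' t)).trans_le (hM t ht)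
  obtain ⟨φ, hgφ, hφ_supp, hφ_smooth⟩ := hg
  have hφ : MemLp φ 2 := (memLp_congr_ae hgφ).1 (Lp.memLp g)
  obtain rfl : hφ.toLp φ = g := Lp.ext (hφ.coeFn_toLp.trans hgφ.symm)
  simp only [← l2Inner_eq_inner_toLp]
  exact (hasDerivAt_l2Inner_of_hasCompactSupport hf hf' hderiv hcont hφ hφ_smooth.continuous
    hφ_supp t).hasDerivWithinAt

end TimeDependence

/-- A solution of the regularized Chern–Simons–Schrödinger equation with time derivative `du`: it
is jointly `C¹` and Schwartz in space at every time. -/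
structure IsCSSSolution (β R : ℝ) (u : ℝ → SchwartzMap E2 ℂ) (du : ℝ → E2 → ℂ) : Prop where
  contDiff : ContDiff ℝ 1 fun p : ℝ × E2 => u p.1 p.2
  hasDerivAt : ∀ t x, HasDerivAt (fun s => u s x) (du t x) t
  equation : ∀ t x, Complex.I * du t x = cssRHS β R (u t) x

namespace IsCSSSolution

open Complex Set LineDeriv Function

variable {β R : ℝ} {u : ℝ → SchwartzMap E2 ℂ} {du : ℝ → E2 → ℂ} {a b M : ℝ}

lemma deriv_eq (h : IsCSSSolution β R u du) (t : ℝ) : du t = -(I • cssRHS β R (u t)) := by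
  ext x
  simp [← h.equation, ← mul_assoc]

lemma memLp_deriv (h : IsCSSSolution β R u du) (hR : 0 < R) (t : ℝ) : MemLp (du t) 2 := by
  rw [h.deriv_eq]
  exact ((memLp_cssRHS hR β (u t)).const_smul I).neg

lemma continuous_deriv (h : IsCSSSolution β R u du) : Continuous (uncurry du) := by
  have hdu : uncurry du = fun p => fderiv ℝ (fun p : ℝ × E2 => u p.1 p.2) p (1, 0) := by
    ext ⟨t, x⟩
    have hcurve := ((h.contDiff.differentiable one_ne_zero (t, x)).hasFDerivAt).comp_hasDerivAt t
      ((hasDerivAt_id t).prodMk (hasDerivAt_const t x))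
    exact (h.hasDerivAt t x).unique hcurve
  rw [hdu]
  exact (h.contDiff.continuous_fderiv one_ne_zero).clm_apply continuous_const

lemma continuous_lineDeriv (h : IsCSSSolution β R u du) (j : Fin 2) (x : E2) :
    Continuous fun t => ∂_{e2 j} (u t) x := by
  have hfderiv t : ∂_{e2 j} (u t) x =
      fderiv ℝ (fun p : ℝ × E2 => u p.1 p.2) (t, x) (0, e2 j) := by
    have hcurve := ((h.contDiff.differentiable one_ne_zero (t, x)).hasFDerivAt).comp x
      ((hasFDerivAt_const t x).prodMk (hasFDerivAt_id x))
    rw [← fderiv_apply_e2, ((u t).differentiableAt.hasFDerivAt.unique hcurve)]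
    simp
  simp only [hfderiv]
  exact ((h.contDiff.continuous_fderiv one_ne_zero).clm_apply continuous_const).comp (by fun_prop)

lemma lowerSemicontinuous_h1Norm_add_lpNorm_deriv (h : IsCSSSolution β R u du) (hR : 0 < R) :
    LowerSemicontinuous fun t => h1Norm (u t) + ‖du t‖₂ :=
  ((lowerSemicontinuous_lpNorm (fun t => (u t).memLp 2)
    fun x => continuous_iff_continuousAt.2 fun t => (h.hasDerivAt t x).continuousAt).add
    (lowerSemicontinuous_sum fun j _ => lowerSemicontinuous_lpNorm
      (fun t => (∂_{e2 j} (u t)).memLp 2) (h.continuous_lineDeriv j))).add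
    (lowerSemicontinuous_lpNorm (h.memLp_deriv hR) fun x =>
      h.continuous_deriv.comp (Continuous.prodMk_left x))

lemma hasWeakDerivOn (h : IsCSSSolution β R u du) (hR : 0 < R) {s : Set ℝ} (hs : Convex ℝ s)
    (hM : ∀ t ∈ s, ‖du t‖₂ ≤ M) :
    HasWeakDerivOn (fun t => ((u t).memLp 2).toLp (u t))
      (fun t => (h.memLp_deriv hR t).toLp (du t)) s :=
  hasWeakDerivOn_toLp (fun t => (u t).memLp 2) (h.memLp_deriv hR) h.hasDerivAt h.continuous_deriv
    hs hM

lemma lpNorm_eq (h : IsCSSSolution β R u du) (hR : 0 < R)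
    (hM : ∀ t ∈ uIcc a b, ‖du t‖₂ ≤ M) : ‖u a‖₂ = ‖u b‖₂ := by
  have hs := convex_uIcc (𝕜 := ℝ) a b
  simpa only [norm_toLp_eq_lpNorm] using (h.hasWeakDerivOn hR hs hM).norm_eq_of_inner_eq_zero hs
    (fun t ht => (norm_toLp_eq_lpNorm _).trans_le (hM t ht)) (fun t _ => by
      rw [← l2Inner_eq_inner_toLp, h.deriv_eq, cssRHS_eq_meanFieldHamiltonian hR, l2Inner_neg_right,
        l2Inner_I_smul_meanFieldHamiltonian hR, neg_zero]) left_mem_uIcc right_mem_uIcc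

lemma energy_eq_of_bounded (h : IsCSSSolution β R u du) (hR : 0 < R)
    (hu : ∀ t ∈ uIcc a b, h1Norm (u t) ≤ M) (hdu : ∀ t ∈ uIcc a b, ‖du t‖₂ ≤ M) :
    energy β R (u a) = energy β R (u b) := by
  obtain ⟨C, -, hC⟩ := exists_energy_taylor_le hR β ((h1Norm_nonneg _).trans (hu a left_mem_uIcc))
  have hN t : MemLp (cssRHS β R (u t)) 2 := memLp_cssRHS hR β (u t)
  refine (h.hasWeakDerivOn hR (convex_uIcc a b) hdu).eq_of_taylor_le (C := C) (M := M) (N := M)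
    (e := fun t => energy β R (u t)) (n := fun t => (hN t).toLp _)
    (fun t ht => (norm_toLp_eq_lpNorm _).trans_le (hdu t ht)) (fun t ht => ?_) (fun t _ => ?_)
    fun r hr t ht => ?_
  · refine ((norm_toLp_eq_lpNorm (hN t)).trans ?_).trans_le (hdu t ht)
    rw [h.deriv_eq, lpNorm_neg, lpNorm_const_smul]
    simp
  · rw [← l2Inner_eq_inner_toLp, h.deriv_eq, l2Inner_neg_right, l2Inner_I_smul_self, neg_zero]
  · rw [← MemLp.toLp_sub, ← l2Inner_eq_inner_toLp, norm_toLp_eq_lpNorm]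
    exact hC (u t) (u r) (hu t ht) (hu r hr)

lemma exists_lpNorm_deriv_le (hR : 0 < R) (β : ℝ) (hM : 0 ≤ M) :
    ∃ C, 0 ≤ C ∧ ∀ u du, IsCSSSolution β R u du → ∀ a b L,
      (∀ t ∈ uIcc a b, h1Norm (u t) ≤ M) → (∀ t ∈ uIcc a b, ‖du t‖₂ ≤ L) →
        ‖du b‖₂ ≤ Real.exp (C * |b - a|) * ‖du a‖₂ := by
  obtain ⟨C, hC0, hC⟩ := exists_abs_l2Inner_I_smul_cssRHS_sub_le hR β hM
  refine ⟨C, hC0, fun u du h a b L hu hdu => ?_⟩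
  simpa only [norm_toLp_eq_lpNorm] using
    (h.hasWeakDerivOn hR (convex_uIcc a b) hdu).norm_deriv_le_exp_mul
      (fun t ht => (norm_toLp_eq_lpNorm _).trans_le (hdu t ht)) hC0 fun r hr t ht => by
        rw [← MemLp.toLp_sub, ← MemLp.toLp_sub, ← l2Inner_eq_inner_toLp, norm_toLp_eq_lpNorm,
          h.deriv_eq r, h.deriv_eq t, neg_sub_neg, ← smul_sub, ← neg_sub (cssRHS _ _ _), smul_neg,
          l2Inner_neg_right, abs_neg]
        exact hC (u r) (u t) (hu r hr) (hu t ht)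

lemma h1Norm_le_of_forall_bounded (h : IsCSSSolution β R u du) (hR : 0 < R) {L : ℝ}
    (hu : ∀ t ∈ uIcc a b, h1Norm (u t) ≤ L) (hdu : ∀ t ∈ uIcc a b, ‖du t‖₂ ≤ L)
    (ha : h1Norm (u a) ≤ M) {t : ℝ} (ht : t ∈ uIcc a b) :
    h1Norm (u t) ≤ M + 2 * (√(2 * (M + |β| * (R⁻¹ * M ^ 3)) ^ 2) + |β| * (R⁻¹ * M ^ 3)) := by
  have hsub : uIcc a t ⊆ uIcc a b := uIcc_subset_uIcc_left ht
  have hmass : ‖u t‖₂ ≤ M := by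
    rw [← h.lpNorm_eq hR fun r hr => hdu r (hsub hr)]
    exact (lpNorm_le_h1Norm _).trans ha
  have henergy : energy β R (u t) ≤ 2 * (M + |β| * (R⁻¹ * M ^ 3)) ^ 2 := by
    rw [← h.energy_eq_of_bounded hR (fun r hr => hu r (hsub hr)) fun r hr => hdu r (hsub hr)]
    exact energy_le hR β ha
  refine (h1Norm_le_of_energy hR β (u t)).trans ?_
  have := lpNorm_nonneg (f := u t) (p := 2) (μ := volume)
  gcongr

/-- The times at which the solution and its time derivative are bounded by `n`. -/
def boundedTimes (u : ℝ → SchwartzMap E2 ℂ) (du : ℝ → E2 → ℂ) (n : ℕ) : Set ℝ :=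
  {t | h1Norm (u t) + ‖du t‖₂ ≤ n}

lemma monotone_boundedTimes : Monotone (boundedTimes u du) := fun _ _ hmn t ht => by
  rw [boundedTimes, mem_ofPred_eq] at ht ⊢
  exact ht.trans (Nat.cast_le.2 hmn)

lemma h1Norm_le_of_mem_boundedTimes {n : ℕ} {t : ℝ} (ht : t ∈ boundedTimes u du n) :
    h1Norm (u t) ≤ n :=
  (le_add_of_nonneg_right lpNorm_nonneg).trans ht

lemma lpNorm_deriv_le_of_mem_boundedTimes {n : ℕ} {t : ℝ} (ht : t ∈ boundedTimes u du n) :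
    ‖du t‖₂ ≤ n :=
  (le_add_of_nonneg_left (h1Norm_nonneg _)).trans ht

lemma isClosed_boundedTimes (h : IsCSSSolution β R u du) (hR : 0 < R) (n : ℕ) :
    IsClosed (boundedTimes u du n) :=
  (h.lowerSemicontinuous_h1Norm_add_lpNorm_deriv hR).isClosed_preimage n

lemma exists_mem_boundedTimes_of_uIcc_subset (h : IsCSSSolution β R u du) (hR : 0 < R) (k : ℕ) :
    ∃ K, ∀ a b, |a - b| ≤ 1 → (∃ n, uIcc a b ⊆ boundedTimes u du n) →
      a ∈ boundedTimes u du k → b ∈ boundedTimes u du K := by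
  set M : ℝ := k + 2 * (√(2 * (k + |β| * (R⁻¹ * k ^ 3)) ^ 2) + |β| * (R⁻¹ * k ^ 3))
  obtain ⟨C, hC0, hC⟩ := exists_lpNorm_deriv_le hR β (M := M) (by positivity)
  obtain ⟨K, hK⟩ := exists_nat_ge (M + Real.exp C * k)
  refine ⟨K, fun a b hab ⟨n, hn⟩ ha => le_trans (add_le_add ?_ ?_) hK⟩
  all_goals
    have hu : ∀ t ∈ uIcc a b, h1Norm (u t) ≤ M := fun t => h.h1Norm_le_of_forall_bounded hR
      (fun r hr => h1Norm_le_of_mem_boundedTimes (hn hr))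
      (fun r hr => lpNorm_deriv_le_of_mem_boundedTimes (hn hr)) (h1Norm_le_of_mem_boundedTimes ha)
  · exact hu b right_mem_uIcc
  · refine (hC u du h a b n hu fun r hr => lpNorm_deriv_le_of_mem_boundedTimes (hn hr)).trans ?_
    rw [abs_sub_comm]
    exact mul_le_mul (Real.exp_le_exp.2 (mul_le_of_le_one_right hC0 hab))
      (lpNorm_deriv_le_of_mem_boundedTimes ha) lpNorm_nonneg (Real.exp_nonneg C)

lemma exists_uIcc_subset_boundedTimes (h : IsCSSSolution β R u du) (hR : 0 < R) (a b : ℝ) :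
    ∃ n, uIcc a b ⊆ boundedTimes u du n :=
  exists_uIcc_subset_of_iUnion_of_closed (h.isClosed_boundedTimes hR)
    monotone_boundedTimes (fun t => exists_nat_ge (h1Norm (u t) + ‖du t‖₂))
    (h.exists_mem_boundedTimes_of_uIcc_subset hR) a b

end IsCSSSolution

theorem statement13_general {β R : ℝ} (hR : 0 < R) {u : ℝ → SchwartzMap E2 ℂ}
    {du : ℝ → E2 → ℂ} (h : IsCSSSolution β R u du) (a b : ℝ) :
    energy β R (u a) = energy β R (u b) := by
  obtain ⟨n, hn⟩ := h.exists_uIcc_subset_boundedTimes hR a b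
  exact h.energy_eq_of_bounded hR
    (fun t ht => IsCSSSolution.h1Norm_le_of_mem_boundedTimes (hn ht))
    fun t ht => IsCSSSolution.lpNorm_deriv_le_of_mem_boundedTimes (hn ht)

/-- Theorem 3.1, eq. (3.3) (conservation of energy for the regularized CSS equation):
if `u` is a jointly smooth, Schwartz-in-space solution of
`i∂ₜu = −Δu − 2iβ A·∇u + β²‖A‖²u − β(K_R ∗ (2βA|u|² + J[u]))u`, `A = K_R ∗ |u|²`,
then `E(t) = ∫ ‖−i∇u + βAu‖²` is constant in time. -/
theorem statement13 (β R : ℝ) (hR : 0 < R) (u : ℝ → SchwartzMap E2 ℂ) (du : ℝ → E2 → ℂ)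
    (hjoint : ContDiff ℝ (⊤ : ℕ∞) fun p : ℝ × E2 => u p.1 p.2)
    (hderiv : ∀ t x, HasDerivAt (fun s => u s x) (du t x) t)
    (hpde : ∀ t x, Complex.I * du t x = cssRHS β R (⇑(u t)) x) :
    ∀ t : ℝ, energy β R (⇑(u t)) = energy β R (⇑(u 0)) := by
  intro t
  exact statement13_general hR ⟨hjoint.of_le (mod_cast le_top), hderiv, hpde⟩ t 0
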